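/- arXiv:2205.13017 — 7 statements merged into one kernel-verified Lean document; each statement's English description precedes it below -/
import Mathlib

section
/- Let p be a prime, m a positive integer, F = (F₁, …, F_m) a system of m polynomials with F_i ∈ ℤ_p[x₁, …, x_m], and P = (P₁, …, P_m) ∈ ℤ_p^m. Let D_F denote the determinant of the Jacobian matrix (∂F_i/∂x_j)_{i,j}. Assume D_F(P) ≠ 0, and set v₂ = v_p(D_F(P)) and v₁ = min{ v_p(F_i(P)) : i = 1, …, m }. If v₁ > 2·v₂, then there exists a unique Q = (Q₁, …, Q_m) ∈ ℤ_p^m such that F_i(Q) = 0 for all i and v_p(P_i − Q_i) ≥ v₁ − v₂ for all i. -/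
open MvPolynomial

/-!
The root is produced by the Newton-like iteration with frozen derivative. Let `J` be the Jacobian
matrix at `P`, `A` its adjugate, `D = det J`, and let `B` be the closed ball of radius
`r = p ^ (-(v₁ - v₂))` around `P`, so that `r < |D|` and `|F(P)| ≤ |D| r`.

The second-order estimate `norm_eval_sub_eval_sub_le` says that `F(x) - F(x') = J (x - x')` up to an
error of norm at most `r |x - x'|` for `x, x' ∈ B`. Multiplying by `A` turns `J` into `D`, hence
`A F(x)` has norm at most `|D| r` on `B`, so it is divisible by `D` with a quotient `g x` of norm at
most `r`. Thus `T x = x - g x` maps `B` to itself, and the same estimate shows that it contracts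
distances by the factor `r / |D| < 1`. As `D ≠ 0`, the fixed points of `T` in `B` are precisely the
zeros of `F` in `B`, and Banach's fixed point theorem gives both existence and uniqueness.
-/

section Estimates

variable {p : ℕ} [Fact p.Prime] {m : ℕ}

lemma norm_sum_le_of_forall {ι : Type*} (s : Finset ι) (f : ι → ℤ_[p]) {C : ℝ} (hC : 0 ≤ C)
    (h : ∀ i ∈ s, ‖f i‖ ≤ C) : ‖∑ i ∈ s, f i‖ ≤ C :=
  IsUltrametricDist.norm_sum_le_of_forall_le_of_nonneg hC h

lemma padicInt_norm_add_le {a b : ℤ_[p]} {C : ℝ} (ha : ‖a‖ ≤ C) (hb : ‖b‖ ≤ C) : ‖a + b‖ ≤ C :=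
  (PadicInt.nonarchimedean a b).trans (max_le ha hb)

lemma pi_norm_add_le {a b : Fin m → ℤ_[p]} {C : ℝ} (ha : ‖a‖ ≤ C) (hb : ‖b‖ ≤ C) :
    ‖a + b‖ ≤ C :=
  (pi_norm_le_iff_of_nonneg ((norm_nonneg a).trans ha)).2 fun i =>
    padicInt_norm_add_le ((norm_le_pi_norm a i).trans ha) ((norm_le_pi_norm b i).trans hb)

/-- Matrices with `p`-adic integer entries do not increase the sup norm. -/
lemma norm_mulVec_le (A : Matrix (Fin m) (Fin m) ℤ_[p]) (v : Fin m → ℤ_[p]) :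
    ‖A.mulVec v‖ ≤ ‖v‖ := by
  refine (pi_norm_le_iff_of_nonneg (norm_nonneg v)).2 fun i => ?_
  refine norm_sum_le_of_forall _ _ (norm_nonneg v) fun j _ => ?_
  rw [norm_mul]
  exact (mul_le_of_le_one_left (norm_nonneg _) (PadicInt.norm_le_one _)).trans (norm_le_pi_norm v j)

lemma norm_eval_sub_eval_le (f : MvPolynomial (Fin m) ℤ_[p]) (x y : Fin m → ℤ_[p]) :
    ‖eval x f - eval y f‖ ≤ ‖x - y‖ := by
  induction f using MvPolynomial.induction_on with
  | C a => simp
  | add f g hf hg =>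
    have : eval x (f + g) - eval y (f + g) =
        (eval x f - eval y f) + (eval x g - eval y g) := by simp only [map_add]; ring
    rw [this]
    exact padicInt_norm_add_le hf hg
  | mul_X f i hf =>
    have : eval x (f * X i) - eval y (f * X i) =
        (eval x f - eval y f) * x i + eval y f * (x - y) i := by
      simp only [map_mul, eval_X, Pi.sub_apply]; ring
    rw [this]
    refine padicInt_norm_add_le ?_ ?_
    · rw [norm_mul]
      exact (mul_le_of_le_one_right (norm_nonneg _) (PadicInt.norm_le_one _)).trans hf
    · rw [norm_mul]
      exact (mul_le_of_le_one_left (norm_nonneg _) (PadicInt.norm_le_one _)).trans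
        (norm_le_pi_norm _ i)

/-- Second-order Taylor estimate: near `P`, differences of values of a polynomial are given by its
linear part at `P` up to a quadratically small error. -/
lemma norm_eval_sub_eval_sub_le (f : MvPolynomial (Fin m) ℤ_[p]) {P x y : Fin m → ℤ_[p]} {r : ℝ}
    (hx : ‖x - P‖ ≤ r) (hy : ‖y - P‖ ≤ r) :
    ‖eval x f - eval y f - ∑ j, eval P (pderiv j f) * (x - y) j‖ ≤ r * ‖x - y‖ := by
  have hr : 0 ≤ r := (norm_nonneg _).trans hx
  induction f using MvPolynomial.induction_on with
  | C a => simpa using mul_nonneg hr (norm_nonneg _)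
  | add f g hf hg =>
    have : eval x (f + g) - eval y (f + g) - ∑ j, eval P (pderiv j (f + g)) * (x - y) j =
        (eval x f - eval y f - ∑ j, eval P (pderiv j f) * (x - y) j) +
        (eval x g - eval y g - ∑ j, eval P (pderiv j g) * (x - y) j) := by
      simp only [map_add, add_mul, Finset.sum_add_distrib]; ring
    rw [this]
    exact padicInt_norm_add_le hf hg
  | mul_X f i hf =>
    have hs : ∑ j, eval P (pderiv j (f * X i)) * (x - y) j =
        (∑ j, eval P (pderiv j f) * (x - y) j) * P i + eval P f * (x - y) i := by
      simp only [Derivation.leibniz, pderiv_X, smul_eq_mul, map_add, map_mul, eval_X, add_mul,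
        Finset.sum_add_distrib, Finset.sum_mul]
      rw [add_comm]
      congr 1
      · exact Finset.sum_congr rfl fun j _ => by ring
      · rw [Finset.sum_eq_single i]
        · simp
        · intro j _ hj
          simp [hj.symm]
        · simp
    have : eval x (f * X i) - eval y (f * X i) - ∑ j, eval P (pderiv j (f * X i)) * (x - y) j =
        (eval x f - eval y f - ∑ j, eval P (pderiv j f) * (x - y) j) * P i +
        ((x - P) i * (eval x f - eval y f) + (eval y f - eval P f) * (x - y) i) := by
      rw [hs]
      simp only [map_mul, eval_X, Pi.sub_apply]; ring
    rw [this]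
    refine padicInt_norm_add_le ?_ (padicInt_norm_add_le ?_ ?_)
    · rw [norm_mul]
      exact (mul_le_of_le_one_right (norm_nonneg _) (PadicInt.norm_le_one _)).trans hf
    · rw [norm_mul]
      exact mul_le_mul ((norm_le_pi_norm _ i).trans hx) (norm_eval_sub_eval_le f x y)
        (norm_nonneg _) hr
    · rw [norm_mul]
      exact mul_le_mul ((norm_eval_sub_eval_le f y P).trans hy) (norm_le_pi_norm _ i)
        (norm_nonneg _) hr

/-- A vector all of whose entries have norm at most `‖D‖` is divisible by `D` over `ℤ_[p]`, with
control of the norm of the quotient. -/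
lemma exists_smul_eq_of_norm_le {D : ℤ_[p]} (hD : D ≠ 0) {v : Fin m → ℤ_[p]} {r : ℝ}
    (hr : 0 ≤ r) (hr1 : r ≤ 1) (hv : ‖v‖ ≤ ‖D‖ * r) :
    ∃ w : Fin m → ℤ_[p], D • w = v ∧ ‖w‖ ≤ r := by
  have hD' : 0 < ‖D‖ := norm_pos_iff.2 hD
  have hdvd : ∀ i, ∃ c, v i = D * c := by
    intro i
    have hle : ‖v i‖ ≤ ‖D‖ :=
      (norm_le_pi_norm v i).trans <| hv.trans <| mul_le_of_le_one_right hD'.le hr1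
    have hq : ‖(v i : ℚ_[p]) / (D : ℚ_[p])‖ ≤ 1 := by
      rw [norm_div]
      exact (div_le_one hD').2 hle
    refine ⟨⟨_, hq⟩, Subtype.ext ?_⟩
    have hDq : (D : ℚ_[p]) ≠ 0 := fun h => hD (Subtype.ext h)
    exact (mul_div_cancel₀ (v i : ℚ_[p]) hDq).symm
  choose w hw using hdvd
  have hDw : D • w = v := funext fun i => (hw i).symm
  refine ⟨w, hDw, (pi_norm_le_iff_of_nonneg hr).2 fun i => ?_⟩
  have := (norm_le_pi_norm v i).trans hv
  rw [hw, norm_mul] at this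
  exact le_of_mul_le_mul_left this hD'

/-- Norm form of the multivariate Hensel lemma, for an arbitrary radius `r < |D|` with
`|F(P)| ≤ |D| r`. -/
theorem existsUnique_zero_of_norm_le (F : Fin m → MvPolynomial (Fin m) ℤ_[p])
    (P : Fin m → ℤ_[p]) {D : ℤ_[p]}
    (hD : D = (Matrix.of fun i j : Fin m => eval P (pderiv j (F i))).det) {r : ℝ} (hr : 0 ≤ r)
    (hrD : r < ‖D‖) (hF : ∀ i, ‖eval P (F i)‖ ≤ ‖D‖ * r) :
    ∃! Q : Fin m → ℤ_[p], (∀ i, eval Q (F i) = 0) ∧ ‖Q - P‖ ≤ r := by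
  have hD' : 0 < ‖D‖ := hr.trans_lt hrD
  have hD0 : D ≠ 0 := norm_pos_iff.1 hD'
  set J : Matrix (Fin m) (Fin m) ℤ_[p] := Matrix.of fun i j => eval P (pderiv j (F i)) with hJ
  let Φ : (Fin m → ℤ_[p]) → Fin m → ℤ_[p] := fun x i => eval x (F i)
  let G : (Fin m → ℤ_[p]) → Fin m → ℤ_[p] := fun x => J.adjugate.mulVec (Φ x)
  have hadj : ∀ v, J.adjugate.mulVec (J.mulVec v) = D • v := fun v => by
    rw [Matrix.mulVec_mulVec, Matrix.adjugate_mul, ← hD, Matrix.smul_mulVec, Matrix.one_mulVec]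
  -- the multiple `G` of the system has derivative `D` times the identity, up to second order
  have key : ∀ x y, ‖x - P‖ ≤ r → ‖y - P‖ ≤ r → ‖G x - G y - D • (x - y)‖ ≤ r * ‖x - y‖ := by
    intro x y hx hy
    have : G x - G y - D • (x - y) = J.adjugate.mulVec (Φ x - Φ y - J.mulVec (x - y)) := by
      simp only [G]
      rw [Matrix.mulVec_sub _ (Φ x - Φ y), Matrix.mulVec_sub _ (Φ x), hadj]
    rw [this]
    refine (norm_mulVec_le _ _).trans ?_
    refine (pi_norm_le_iff_of_nonneg (mul_nonneg hr (norm_nonneg _))).2 fun i => ?_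
    exact norm_eval_sub_eval_sub_le (F i) hx hy
  have hGP : ‖G P‖ ≤ ‖D‖ * r := (norm_mulVec_le _ _).trans <|
    (pi_norm_le_iff_of_nonneg (mul_nonneg hD'.le hr)).2 hF
  have hG : ∀ x, ‖x - P‖ ≤ r → ‖G x‖ ≤ ‖D‖ * r := by
    intro x hx
    have h1 : ‖G x - G P - D • (x - P)‖ ≤ ‖D‖ * r :=
      (key x P hx (by simpa using hr)).trans
        (mul_le_mul hrD.le hx (norm_nonneg _) hD'.le)
    have h2 : ‖D • (x - P)‖ ≤ ‖D‖ * r := by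
      rw [norm_smul]
      exact mul_le_mul_of_nonneg_left hx hD'.le
    have : G x = (G x - G P - D • (x - P)) + (D • (x - P) + G P) := by abel
    rw [this]
    exact pi_norm_add_le h1 (pi_norm_add_le h2 hGP)
  have hr1 : r ≤ 1 := hrD.le.trans (PadicInt.norm_le_one D)
  have hex : ∀ x, ∃ w : Fin m → ℤ_[p], ‖x - P‖ ≤ r → D • w = G x ∧ ‖w‖ ≤ r := by
    intro x
    by_cases hx : ‖x - P‖ ≤ r
    · obtain ⟨w, hw⟩ := exists_smul_eq_of_norm_le hD0 hr hr1 (hG x hx)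
      exact ⟨w, fun _ => hw⟩
    · exact ⟨0, fun h => absurd h hx⟩
  choose g hg using hex
  let B : Set (Fin m → ℤ_[p]) := Metric.closedBall P r
  have hB : ∀ x, x ∈ B ↔ ‖x - P‖ ≤ r := fun x => mem_closedBall_iff_norm
  have hmaps : Set.MapsTo (fun x => x - g x) B B := by
    intro x hx
    rw [hB] at hx ⊢
    have : x - g x - P = (x - P) + -g x := by abel
    rw [this]
    exact pi_norm_add_le hx (by rw [norm_neg]; exact (hg x hx).2)
  have hzero : ∀ x, ‖x - P‖ ≤ r → ((∀ i, eval x (F i) = 0) ↔ x - g x = x) := by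
    intro x hx
    have hdet : J.adjugate.det ≠ 0 := by
      rw [Matrix.det_adjugate, ← hD]
      exact pow_ne_zero _ hD0
    rw [sub_eq_self]
    constructor
    · intro h
      have h0 : Φ x = 0 := funext h
      have := (hg x hx).1
      simp only [G, h0, Matrix.mulVec_zero] at this
      exact (smul_eq_zero.1 this).resolve_left hD0
    · intro h
      have := (hg x hx).1
      rw [h, smul_zero] at this
      exact fun i => congrFun (Matrix.eq_zero_of_mulVec_eq_zero hdet this.symm) i
  let K : NNReal := ⟨r / ‖D‖, div_nonneg hr hD'.le⟩
  have hK : K < 1 := by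
    rw [← NNReal.coe_lt_coe]
    exact (div_lt_one hD').2 hrD
  have hcontr : ContractingWith K (hmaps.restrict _ B B) := by
    refine ⟨hK, LipschitzWith.of_dist_le_mul fun x y => ?_⟩
    have hx := (hB _).1 x.2
    have hy := (hB _).1 y.2
    rw [Subtype.dist_eq, Subtype.dist_eq, dist_eq_norm, dist_eq_norm]
    change ‖(x.1 - g x) - (y.1 - g y)‖ ≤ r / ‖D‖ * ‖x.1 - y.1‖
    rw [div_mul_eq_mul_div, le_div_iff₀' hD', ← norm_smul, ← norm_neg]
    have hneg : -(D • (x.1 - g x - (y.1 - g y))) = G x - G y - D • (x.1 - y.1) := by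
      rw [← (hg x hx).1, ← (hg y hy).1]
      simp only [smul_sub]
      abel
    rw [hneg]
    exact key x y hx hy
  have : CompleteSpace B := Metric.isClosed_closedBall.completeSpace_coe
  have : Nonempty B := ⟨⟨P, Metric.mem_closedBall_self hr⟩⟩
  let Q := ContractingWith.fixedPoint _ hcontr
  have hQ : hmaps.restrict _ B B Q = Q := hcontr.fixedPoint_isFixedPt
  refine ⟨Q, ⟨(hzero _ ((hB _).1 Q.2)).2 (congrArg Subtype.val hQ), (hB _).1 Q.2⟩, ?_⟩
  rintro y ⟨hy0, hy⟩
  exact congrArg Subtype.val <| hcontr.fixedPoint_unique (x := ⟨y, (hB y).2 hy⟩) <|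
    Subtype.ext ((hzero y hy).1 hy0)

end Estimates


/-- Multivariate Hensel's lemma over the p-adic integers (Theorem 4 of the paper).
Valuation conditions are expressed via the p-adic norm: for `x ≠ 0`,
`‖x‖ = p ^ (-v_p x)`, so `v_p x ≥ v` iff `‖x‖ ≤ p ^ (-v)`, and
`v₁ = min_i v_p (F_i(P))` iff `p ^ (-v₁)` is the greatest value of `‖F_i(P)‖`. -/
theorem stmt_0 (p : ℕ) [Fact p.Prime] (m : ℕ) (hm : 0 < m)
    (F : Fin m → MvPolynomial (Fin m) ℤ_[p]) (P : Fin m → ℤ_[p])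
    (DF : ℤ_[p])
    (hDF : DF = (Matrix.of fun i j : Fin m => eval P (pderiv j (F i))).det)
    (hDF0 : DF ≠ 0)
    (v₁ v₂ : ℤ)
    (hv₂ : v₂ = DF.valuation)
    (hv₁ : IsGreatest (Set.range fun i => ‖eval P (F i)‖) ((p : ℝ) ^ (-v₁)))
    (h : v₁ > 2 * v₂) :
    ∃! Q : Fin m → ℤ_[p],
      (∀ i, eval Q (F i) = 0) ∧
      ∀ i, ‖P i - Q i‖ ≤ (p : ℝ) ^ (-(v₁ - v₂)) := by
  have hp : (0 : ℝ) < p := by exact_mod_cast (Fact.out : p.Prime).pos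
  have hp1 : (1 : ℝ) < p := by exact_mod_cast (Fact.out : p.Prime).one_lt
  have hDn : ‖DF‖ = (p : ℝ) ^ (-v₂) := by
    rw [PadicInt.norm_eq_zpow_neg_valuation hDF0, hv₂]
  have hr : (0 : ℝ) ≤ (p : ℝ) ^ (-(v₁ - v₂)) := (zpow_pos hp _).le
  have hrD : (p : ℝ) ^ (-(v₁ - v₂)) < ‖DF‖ := by
    rw [hDn]
    exact zpow_lt_zpow_right₀ hp1 (by omega)
  have hF : ∀ i, ‖eval P (F i)‖ ≤ ‖DF‖ * (p : ℝ) ^ (-(v₁ - v₂)) := by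
    intro i
    rw [hDn, ← zpow_add₀ hp.ne', show -v₂ + -(v₁ - v₂) = -v₁ by ring]
    exact hv₁.2 ⟨i, rfl⟩
  have hball : ∀ Q : Fin m → ℤ_[p], (∀ i, ‖P i - Q i‖ ≤ (p : ℝ) ^ (-(v₁ - v₂))) ↔
      ‖Q - P‖ ≤ (p : ℝ) ^ (-(v₁ - v₂)) := fun Q => by
    rw [norm_sub_rev, pi_norm_le_iff_of_nonneg hr]
    rfl
  simp only [hball]
  exact existsUnique_zero_of_norm_le F P hDF hr hrD hF
end

section
/- For each pair (a,b) in the set {(−3,−1), (1,−1), (2,−1), (−2,−1)}, there exist a nonzero rational number c and a homogeneous quadratic form q(y,z) ∈ ℚ[y,z] such that f(a·y + b·z, y, z) = c · q(y,z)². (Equivalently, each of the four lines x = −3y − z, x = y − z, x = 2y − z, x = −2y − z is a bitangent to the curve X.) -/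
/-- The quartic form defining the canonical model of `X₀(75)/w₂₅`. -/
def fQuartic (x y z : ℚ) : ℚ :=
  3*x^3*z - 3*x^2*y^2 + 5*x^2*z^2 - 3*x*y^3 - 19*x*y^2*z - x*y*z^2 + 3*x*z^3
    + 2*y^4 + 7*y^3*z - 7*y^2*z^2 - 3*y*z^3

/-- Each of the four lines `x = -3y - z`, `x = y - z`, `x = 2y - z`, `x = -2y - z`
is a bitangent to `X₀(75)/w₂₅`. -/
theorem stmt_1 :
    ∀ a b : ℚ, (a, b) ∈ ({(-3, -1), (1, -1), (2, -1), (-2, -1)} : Set (ℚ × ℚ)) →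
      ∃ c α β γ : ℚ, c ≠ 0 ∧
        ∀ y z : ℚ, fQuartic (a*y + b*z) y z = c * (α*y^2 + β*y*z + γ*z^2)^2 := by
  intro a b h
  simp only [Set.mem_insert_iff, Set.mem_singleton_iff, Prod.mk.injEq] at h
  -- Each restriction has `z⁴`-coefficient `-1`, so one may take `c = -1` and `γ = ±1`;
  -- comparing the other coefficients then gives `q`.
  rcases h with ⟨rfl, rfl⟩ | ⟨rfl, rfl⟩ | ⟨rfl, rfl⟩ | ⟨rfl, rfl⟩
  · exact ⟨-1, 4, 4, 1, by norm_num, fun y z => by unfold fQuartic; ring⟩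
  · exact ⟨-1, 2, 0, -1, by norm_num, fun y z => by unfold fQuartic; ring⟩
  · exact ⟨-1, 4, -1, 1, by norm_num, fun y z => by unfold fQuartic; ring⟩
  · exact ⟨-1, 2, -3, -1, by norm_num, fun y z => by unfold fQuartic; ring⟩
end

section
/- Let 𝔽 be the finite field with 289 = 17² elements, and consider the polynomials e₁, e₂, e₃, e₄ ∈ 𝔽[a₁, a₂, a₃, a₄] given by e₁ = 3a₁²a₄² + 3a₁a₄² + 3a₂³ + 5a₂² + 3a₂ − 2a₄², e₂ = 6a₁²a₃a₄ + 9a₁a₂² + 10a₁a₂ + 6a₁a₃a₄ + 3a₁ − a₂ − 4a₃a₄ − 3, e₃ = 9a₁²a₂ + 3a₁²a₃² + 6a₁²a₄ + 5a₁² + 3a₁a₃² + 6a₁a₄ − a₁ − 3a₂² − 19a₂ − 2a₃² − 4a₄ − 7, and e₄ = 3a₁³ + 6a₁²a₃ − 6a₁a₂ + 6a₁a₃ − 19a₁ − 3a₂ − 4a₃ + 7. Then the quotient ring 𝔽[a₁, a₂, a₃, a₄]/(e₁, e₂, e₃, e₄) is a finite-dimensional 𝔽-vector space of dimension exactly 28.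 -/
/-! Write `a, b, c, d` for the images of the four variables in the quotient ring `B`, and put
`l = 3a² + 3a - 2`.  Both `e₄` and `e₃` are linear in one of the variables, with leading coefficient
a multiple of `l`: they say `2 l c = P(a, b)` and `8 l² d = Q(a, b)`, with `P` linear and `Q`
quadratic in `b`.  Moreover `l` is a unit of `B` (`isUnit_l`): modulo `l` the equation `e₄` gives `b`
in terms of `a`, and then `e₃` becomes a linear polynomial in `a` coprime to `l`.  Substituting in
`e₁`, `e₂` gives a quartic `E₁` and a cubic `E₂` in `b` over `𝔽₁₇[a]`.

*Upper bound.* Elimination of `b` between `E₁` and `E₂` (a Hermite normal form over `𝔽₁₇[a]`), after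
inverting `l`, gives
`m(a) = 0`, `q(a) b = r(a)` and `b² = u(a) + v(a) b` with `deg m = 26` and `deg q = 2`.
Since the inverse of `l(a)` is a polynomial in `a` modulo `m`, the ring `B` is generated by `a`
and `b`, hence is spanned by `aⁱ` (`i < 26`), `b` and `a b`: this is `finite_and_finrank_le`.
The values of `a` alone do not separate the bitangents, as two of them lie over each root
of `q`.

*Lower bound.* The linear form `t = a + 2b` does separate the bitangents.  With `G` its
minimal polynomial, of degree 28, and `α, β, γ, δ ∈ 𝔽₁₇[t]` expressing the coordinates, all `eᵢ`
vanish at `(α, β, γ, δ)` in `𝔽[t]/(G)`, and `α + 2β = t`, so `B` surjects onto `𝔽[t]/(G)`.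

The polynomials over `𝔽₁₇` involved are encoded by lists of integers, and the identities between
them (with all cofactors explicit) are checked by evaluation in the kernel.
-/

open MvPolynomial

instance : Fact (Nat.Prime 17) := ⟨by norm_num⟩

namespace Bitangents

/-! ### Polynomials as lists of integers -/

section Lists

variable {R : Type*} [CommRing R]

/-- The value at `x` of the polynomial with the given coefficients, constant term first. -/
def ev : List ℤ → R → R
  | [], _ => 0
  | c :: f, x => c + x * ev f x

/-- Sum of two coefficient lists. -/
def add : List ℤ → List ℤ → List ℤ
  | [], g => g
  | f, [] => f
  | c :: f, d :: g => (c + d) :: add f g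

/-- Multiple of a coefficient list by an integer. -/
def smul (k : ℤ) (f : List ℤ) : List ℤ := f.map (k * ·)

/-- Product of two coefficient lists. -/
def mul : List ℤ → List ℤ → List ℤ
  | [], _ => []
  | c :: f, g => add (smul c g) (0 :: mul f g)

/-- All coefficients vanish modulo 17. -/
def isZero (f : List ℤ) : Bool := f.all fun c => c % 17 == 0

/-- The value at `(x, y)` of a polynomial in `y` whose coefficients, constant term first, are
polynomials in `x`. -/
def ev₂ : List (List ℤ) → R → R → R
  | [], _, _ => 0
  | f :: F, x, y => ev f x + y * ev₂ F x y

/-- Sum of bivariate polynomials. -/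
def add₂ : List (List ℤ) → List (List ℤ) → List (List ℤ)
  | [], G => G
  | F, [] => F
  | f :: F, g :: G => add f g :: add₂ F G

/-- Multiple of a bivariate polynomial by a polynomial in the first variable. -/
def smul₂ (f : List ℤ) (G : List (List ℤ)) : List (List ℤ) := G.map (mul f)

/-- Product of bivariate polynomials. -/
def mul₂ : List (List ℤ) → List (List ℤ) → List (List ℤ)
  | [], _ => []
  | f :: F, G => add₂ (smul₂ f G) ([] :: mul₂ F G)

theorem ev_add (f g : List ℤ) (x : R) : ev (add f g) x = ev f x + ev g x := by
  induction f, g using add.induct with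
  | case1 g => simp [add, ev]
  | case2 f _ => cases f <;> simp [add, ev]
  | case3 c f d g ih => simp only [add, ev, ih]; push_cast; ring

theorem ev_smul (k : ℤ) (f : List ℤ) (x : R) : ev (smul k f) x = k * ev f x := by
  induction f with
  | nil => simp [smul, ev]
  | cons c f ih =>
    simp only [smul, List.map_cons, ev] at ih ⊢
    rw [ih]; push_cast; ring

theorem ev_mul (f g : List ℤ) (x : R) : ev (mul f g) x = ev f x * ev g x := by
  induction f with
  | nil => simp [mul, ev]
  | cons c f ih => simp only [mul, ev_add, ev_smul, ev, ih]; push_cast; ring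

theorem ev_eq_zero (h17 : (17 : R) = 0) {f : List ℤ} (hf : isZero f = true) (x : R) :
    ev f x = 0 := by
  induction f with
  | nil => rfl
  | cons c f ih =>
    simp only [isZero, List.all_cons, Bool.and_eq_true, beq_iff_eq] at hf ih
    obtain ⟨k, rfl⟩ := Int.dvd_of_emod_eq_zero hf.1
    simp [ev, ih hf.2, h17]

theorem ev₂_add (F G : List (List ℤ)) (x y : R) : ev₂ (add₂ F G) x y = ev₂ F x y + ev₂ G x y := by
  induction F, G using add₂.induct with
  | case1 g => simp [add₂, ev₂]
  | case2 f _ => cases f <;> simp [add₂, ev₂]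
  | case3 c f d g ih => simp only [add₂, ev₂, ev_add, ih]; ring

theorem ev₂_smul (f : List ℤ) (G : List (List ℤ)) (x y : R) :
    ev₂ (smul₂ f G) x y = ev f x * ev₂ G x y := by
  induction G with
  | nil => simp [smul₂, ev₂]
  | cons c f ih =>
    simp only [smul₂, List.map_cons, ev₂, ev_mul] at ih ⊢
    rw [ih]; ring

theorem ev₂_mul (F G : List (List ℤ)) (x y : R) : ev₂ (mul₂ F G) x y = ev₂ F x y * ev₂ G x y := by
  induction F with
  | nil => simp [mul₂, ev₂]
  | cons c f ih => simp only [mul₂, ev₂_add, ev₂_smul, ev₂, ih, ev]; ring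

theorem ev₂_eq_zero (h17 : (17 : R) = 0) {F : List (List ℤ)} (hF : F.all isZero = true) (x y : R) :
    ev₂ F x y = 0 := by
  induction F with
  | nil => rfl
  | cons f F ih =>
    simp only [List.all_cons, Bool.and_eq_true] at hF
    simp [ev₂, ev_eq_zero h17 hF.1, ih hF.2]

theorem map_ev {S : Type*} [CommRing S] (φ : R →+* S) (f : List ℤ) (x : R) :
    φ (ev f x) = ev f (φ x) := by
  induction f with
  | nil => simp [ev]
  | cons c f ih => simp [ev, ih]

theorem aeval_ev {F : Type*} [Field F] [Algebra F R] (f : List ℤ) (x : R) :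
    Polynomial.aeval x (ev f (Polynomial.X : Polynomial F)) = ev f x := by
  simpa using map_ev (Polynomial.aeval x : Polynomial F →ₐ[F] R).toRingHom f Polynomial.X

open Polynomial in
theorem monic_ev {F : Type*} [Field F] (f : List ℤ) :
    (ev (f ++ [1]) (Polynomial.X : F[X])).Monic ∧ (ev (f ++ [1]) (Polynomial.X : F[X])).natDegree = f.length := by
  induction f with
  | nil => simp [ev]
  | cons c f ih =>
    have hm : (Polynomial.X * ev (f ++ [1]) (Polynomial.X : F[X])).Monic := monic_X.mul ih.1
    have hd : (Polynomial.X * ev (f ++ [1]) (Polynomial.X : F[X])).natDegree = f.length + 1 := by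
      rw [natDegree_X_mul ih.1.ne_zero, ih.2]
    have hlt : ((c : F[X])).degree < (Polynomial.X * ev (f ++ [1]) (Polynomial.X : F[X])).degree := by
      rw [degree_eq_natDegree hm.ne_zero, hd]
      refine (degree_intCast_le c).trans_lt ?_
      exact_mod_cast Nat.succ_pos _
    refine ⟨hm.add_of_right hlt, ?_⟩
    simp only [List.cons_append, ev, List.length_cons]
    rw [natDegree_add_eq_right_of_degree_lt hlt, hd]

end Lists

/-! ### The explicit polynomials -/

/-- The coefficient of `y⁴` in `f(a₁y + a₂, y, 1)`, up to sign, as a polynomial in `a₁`. -/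
def lL : List ℤ := [-2, 3, 3]

/-- On the scheme, `2 l a₃ = P(a₁, a₂)`. -/
def PL : List (List ℤ) := [[-7, 19, 0, -3], [3, 6]]

/-- The part of `e₃` that involves only `a₁` and `a₂`. -/
def restL : List (List ℤ) := [[-7, -1, 5], [-19, 0, 9], [-3]]

/-- On the scheme, `8 l² a₄ = Q(a₁, a₂)`. -/
def QL : List (List ℤ) := smul₂ [-1] (add₂ (mul₂ PL PL) (smul₂ (smul 4 lL) restL))

/-- The quartic in `a₂` obtained from `e₁`. -/
def E1L : List (List ℤ) :=
  add₂ (mul₂ QL QL) (smul₂ (smul 64 (mul lL (mul lL lL))) [[], [3], [5], [3]])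

/-- The cubic in `a₂` obtained from `e₂`. -/
def E2L : List (List ℤ) :=
  add₂ (mul₂ PL QL) (smul₂ (smul 8 (mul lL lL)) [[-3, 3], [-1, 10], [0, 9]])

/-- The fourth power of `l`. -/
def l4L : List ℤ := mul (mul lL lL) (mul lL lL)

/-- The polynomial `m`, monic of degree 26, whose roots are the values of `a₁` on the scheme. -/
def mL : List ℤ :=
  [8, 14, 7, 16, 2, 8, 4, 8, 8, 14, 8, 0, 8, 16, 12, 14, 14, 5, 6, 7, 14, 8, 16, 5, 0, 15, 1]

/-- The quadratic `q`, over each of whose roots there lie two bitangents. -/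
def qL : List ℤ :=
  [7, 12, 1]

/-- The polynomial `r` in the relation `q(a₁) a₂ = r(a₁)`. -/
def rL : List ℤ :=
  [15, 12, 0, 0, 0, 15, 4, 16, 3, 15, 11, 7, 13, 16, 11, 2, 11, 12, 14, 1, 6, 11, 5, 9, 10, 16]

/-- The polynomial `u` in the relation `a₂² = u(a₁) + v(a₁) a₂`. -/
def uL : List ℤ :=
  [3, 13, 1, 5, 13, 8, 14, 8, 13, 10, 3, 7, 13, 15, 14, 15, 12, 0, 8, 12, 15, 15, 10, 14, 5, 12]

/-- The polynomial `v` in the relation `a₂² = u(a₁) + v(a₁) a₂`. -/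
def vL : List ℤ :=
  [6, 13]

/-- The inverse of `l` modulo `m`. -/
def wL : List ℤ :=
  [2, 9, 4, 6, 4, 11, 2, 9, 10, 9, 11, 4, 8, 14, 6, 6, 13, 9, 8, 5, 16, 14, 7, 14, 11, 5]

/-- The Bézout cofactor `s` in `w l + s m = 1`. -/
def sL : List ℤ :=
  [7, 2]

/-- Cofactor of `E₂` for `l(a)⁴ (m(a))`. -/
def V0 : List (List ℤ) :=
  [[11, 1, 16, 13, 8, 12, 2, 8, 3, 15, 15, 2, 16, 16, 14, 8, 2, 12, 3, 2, 5, 6, 8, 3, 1, 10, 10,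
   14], [6, 8, 4, 7, 10, 5, 4, 9, 4, 3, 0, 9, 1, 9, 12, 9, 13, 11, 11, 16, 4, 10, 4, 3, 16, 15],
   [7, 6, 9, 10, 6, 9, 11, 7, 16, 9, 11, 15, 5, 2, 0, 3, 12, 14, 16, 0, 2, 3, 10, 3], [2, 11, 0,
   16, 7, 0, 1, 10, 12, 12, 8, 2, 11, 4, 15, 10, 16, 14]]

/-- Cofactor of `-E₁` for `l(a)⁴ (m(a))`. -/
def U0 : List (List ℤ) :=
  [[15, 7, 0, 7, 4, 0, 12, 3, 9, 8, 10, 7, 3, 8, 3, 15, 9, 7, 0, 14, 3, 3, 14, 9, 16], [6, 13, 14,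
   15, 7, 12, 16, 4, 2, 6, 13, 5, 1, 10, 11, 6, 8, 2, 8, 4, 2, 0, 15], [6, 11, 15, 14, 15, 8, 3,
   2, 11, 6, 11, 3, 11, 10, 1, 1, 6, 2, 16]]

/-- Cofactor of `E₂` for `l(a)⁴ (q(a) b - r(a))`. -/
def V1 : List (List ℤ) :=
  [[4, 1, 0, 12, 2, 14, 5, 10, 5, 8, 16, 4, 16, 12, 10, 16, 16, 4, 5, 6, 7, 16, 10, 4, 5, 0, 14],
   [12, 2, 4, 2, 15, 8, 16, 10, 6, 12, 13, 1, 3, 3, 1, 3, 11, 1, 15, 7, 7, 6, 10, 15, 15], [8, 13,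
   6, 8, 7, 16, 14, 2, 12, 12, 12, 16, 0, 12, 10, 10, 1, 15, 8, 7, 1, 3, 3], [9, 9, 7, 12, 0, 11,
   9, 9, 7, 6, 12, 5, 15, 4, 8, 6, 14]]

/-- Cofactor of `-E₁` for `l(a)⁴ (q(a) b - r(a))`. -/
def U1 : List (List ℤ) :=
  [[16, 4, 7, 3, 16, 2, 2, 12, 12, 2, 14, 4, 10, 11, 13, 6, 15, 9, 8, 12, 15, 1, 0, 16], [16, 5,
   3, 3, 0, 2, 6, 15, 3, 0, 0, 0, 12, 8, 1, 1, 8, 4, 6, 1, 16, 15], [10, 13, 7, 10, 4, 16, 8, 13,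
   7, 9, 4, 2, 7, 0, 14, 15, 10, 16]]

/-- Cofactor of `E₂` for `l(a)⁴ (b² - v(a) b - u(a))`. -/
def V2 : List (List ℤ) :=
  [[3, 8, 13, 12, 10, 12, 10, 16, 5, 9, 6, 11, 7, 5, 3, 13, 10, 15, 12, 12, 0, 9, 15, 8, 10, 1,
   2], [12, 16, 7, 13, 12, 14, 8, 9, 7, 9, 8, 0, 4, 15, 16, 7, 2, 8, 10, 12, 3, 6, 1, 2, 7], [9,
   14, 3, 10, 0, 9, 14, 13, 8, 0, 1, 12, 13, 1, 6, 5, 2, 8, 4, 9, 2, 14, 15], [5, 2, 16, 6, 16,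
   15, 14, 9, 6, 16, 1, 12, 2, 3, 6, 14, 2]]

/-- Cofactor of `-E₁` for `l(a)⁴ (b² - v(a) b - u(a))`. -/
def U2 : List (List ℤ) :=
  [[3, 12, 7, 13, 14, 1, 4, 15, 10, 16, 11, 16, 15, 4, 2, 0, 3, 16, 14, 14, 7, 0, 6, 12], [15, 4,
   12, 15, 1, 12, 1, 16, 11, 9, 10, 14, 9, 6, 7, 4, 16, 5, 14, 1, 7, 7], [15, 2, 9, 12, 16, 5, 13,
   9, 4, 16, 14, 8, 10, 4, 2, 10, 5, 12]]

/-! ### Relations in the quotient ring -/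

section Relations

variable {B : Type*} [CommRing B] (h17 : (17 : B) = 0) {a b c d : B}
  (h₁ : 3*a^2*d^2 + 3*a*d^2 + 3*b^3 + 5*b^2 + 3*b - 2*d^2 = 0)
  (h₂ : 6*a^2*c*d + 9*a*b^2 + 10*a*b + 6*a*c*d + 3*a - b - 4*c*d - 3 = 0)
  (h₃ : 9*a^2*b + 3*a^2*c^2 + 6*a^2*d + 5*a^2 + 3*a*c^2 + 6*a*d - a - 3*b^2 - 19*b
    - 2*c^2 - 4*d - 7 = 0)
  (h₄ : 3*a^3 + 6*a^2*c - 6*a*b + 6*a*c - 19*a - 3*b - 4*c + 7 = 0)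

theorem ev_lL (a : B) : ev lL a = 3*a^2 + 3*a - 2 := by
  simp only [lL, ev]; push_cast; ring

theorem ev₂_PL (a b : B) : ev₂ PL a b = -3*a^3 + 6*a*b + 19*a + 3*b - 7 := by
  simp only [PL, ev₂, ev]; push_cast; ring

theorem ev₂_restL (a b : B) :
    ev₂ restL a b = 9*a^2*b + 5*a^2 - a - 3*b^2 - 19*b - 7 := by
  simp only [restL, ev₂, ev]; push_cast; ring

theorem ev₂_QL (a b : B) :
    ev₂ QL a b = -(ev₂ PL a b ^ 2 + 4 * ev lL a * ev₂ restL a b) := by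
  simp only [QL, ev₂_smul, ev₂_add, ev₂_mul, ev_smul]; simp only [ev]; push_cast; ring

include h17 h₃ h₄ in
/-- Modulo `l`, the equation `e₄` gives `b = 13a + 7`, then `e₃` gives `10a + 11 = 0`, which is
incompatible with `l = 0`. -/
theorem isUnit_l : IsUnit (ev lL a) := by
  rw [ev_lL]
  set l := 3*a^2 + 3*a - 2 with hl
  have d1 : l ∣ b - (13*a + 7) :=
    ⟨12*b - 2*(6*a + 3)*c + (11*a^2 + 3*a - 3), by
      linear_combination (6*a + 3) * h₄ + (2*b + (-3*a^4 - 3*a^3 + 8*a^2 + a - 2)) * h17⟩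
  have d2 : l ∣ 9*a^2*b + 5*a^2 - a - 3*b^2 - 19*b - 7 :=
    ⟨-(c^2 + 2*d), by linear_combination h₃⟩
  have d3 : l ∣ 10*a + 11 := by
    obtain ⟨x, hx⟩ := d1
    obtain ⟨y, hy⟩ := d2
    exact ⟨y - x * (9*a^2 - 3*(b + (13*a + 7)) - 19) - (5*a + 13), by
      linear_combination hy - (9*a^2 - 3*(b + (13*a + 7)) - 19) * hx
        - (6*a^3 - 29*a^2 - 49*a - 16) * h17⟩
  obtain ⟨z, hz⟩ := d3
  exact IsUnit.of_mul_eq_one (5 - 5*z*(2*a + 10)) (by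
    linear_combination (5*(2*a + 10)) * hz + (2 - 5*(a^2 + 7*a + 7)) * h17)

include h₄ in
theorem two_l_c : 2 * ev lL a * c = ev₂ PL a b := by
  rw [ev_lL, ev₂_PL]; linear_combination h₄

include h₃ h₄ in
theorem eight_l_sq_d : 8 * ev lL a ^ 2 * d = ev₂ QL a b := by
  have hc := two_l_c h₄
  have h3 : ev₂ restL a b + ev lL a * (c^2 + 2*d) = 0 := by
    rw [ev_lL, ev₂_restL]; linear_combination h₃
  rw [ev₂_QL, ← hc]; linear_combination 4 * ev lL a * h3

include h₁ h₃ h₄ in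
theorem E1_eq_zero : ev₂ E1L a b = 0 := by
  have h1 : ev lL a * d^2 + (3*b^3 + 5*b^2 + 3*b) = 0 := by
    rw [ev_lL]; linear_combination h₁
  have : ev₂ E1L a b = ev₂ QL a b ^ 2 + 64 * ev lL a ^ 3 * (3*b^3 + 5*b^2 + 3*b) := by
    simp only [E1L, ev₂_smul, ev₂_add, ev₂_mul, ev_smul, ev_mul]
    simp only [ev₂, ev]; push_cast; ring
  rw [this, ← eight_l_sq_d h₃ h₄]; linear_combination 64 * ev lL a ^ 3 * h1

include h₂ h₃ h₄ in
theorem E2_eq_zero : ev₂ E2L a b = 0 := by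
  have h2 : 2 * ev lL a * c * d + (9*a*b^2 + 10*a*b + 3*a - b - 3) = 0 := by
    rw [ev_lL]; linear_combination h₂
  have : ev₂ E2L a b =
      ev₂ PL a b * ev₂ QL a b + 8 * ev lL a ^ 2 * (9*a*b^2 + 10*a*b + 3*a - b - 3) := by
    simp only [E2L, ev₂_smul, ev₂_add, ev₂_mul, ev_smul, ev_mul]
    simp only [ev₂, ev]; push_cast; ring
  rw [this, ← eight_l_sq_d h₃ h₄, ← two_l_c h₄]; linear_combination 8 * ev lL a ^ 2 * h2

include h17 h₁ h₂ h₃ h₄ in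
/-- Any `H` with `l⁴ H = V E₂ - U E₁` vanishes at `(a, b)`. -/
theorem relation (V U H : List (List ℤ))
    (h : (add₂ (add₂ (mul₂ V E2L) (smul₂ [-1] (mul₂ U E1L)))
      (smul₂ [-1] (smul₂ l4L H))).all isZero = true) : ev₂ H a b = 0 := by
  have h0 := ev₂_eq_zero h17 h a b
  simp only [ev₂_add, ev₂_mul, ev₂_smul, E1_eq_zero h₁ h₃ h₄, E2_eq_zero h₂ h₃ h₄, l4L,
    ev_mul] at h0
  have hu := isUnit_l h17 h₃ h₄
  refine (((hu.mul hu).mul (hu.mul hu)).mul_right_eq_zero).1 ?_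
  simp only [ev] at h0
  push_cast at h0
  linear_combination -h0

include h17 h₁ h₂ h₃ h₄

theorem m_eq_zero : ev mL a = 0 := by
  simpa [ev₂] using relation h17 h₁ h₂ h₃ h₄ V0 U0 [mL] (by decide +kernel)

theorem q_mul_b : ev qL a * b = ev rL a := by
  have h := relation h17 h₁ h₂ h₃ h₄ V1 U1 [smul (-1) rL, qL] (by decide +kernel)
  simp only [ev₂, ev_smul] at h
  push_cast at h
  linear_combination h

theorem b_sq : b ^ 2 = ev uL a + ev vL a * b := by
  have h := relation h17 h₁ h₂ h₃ h₄ V2 U2 [smul (-1) uL, smul (-1) vL, [1]]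
    (by decide +kernel)
  simp only [ev₂, ev_smul, ev] at h
  push_cast at h
  linear_combination h

theorem w_mul_l : ev wL a * ev lL a = 1 := by
  have h := ev_eq_zero h17
    (f := add (add (mul wL lL) (mul sL mL)) [-1]) (by decide +kernel) a
  simp only [ev_add, ev_mul, m_eq_zero h17 h₁ h₂ h₃ h₄] at h
  simp only [ev] at h
  push_cast at h
  linear_combination h

theorem c_eq : c = 9 * ev wL a * ev₂ PL a b := by
  have hw := w_mul_l h17 h₁ h₂ h₃ h₄
  rw [← two_l_c h₄]
  linear_combination (-18 * c) * hw - c * h17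

theorem d_eq : d = 15 * ev wL a ^ 2 * ev₂ QL a b := by
  have hw := w_mul_l h17 h₁ h₂ h₃ h₄
  rw [← eight_l_sq_d h₃ h₄]
  linear_combination (-120 * d * (ev wL a * ev lL a + 1)) * hw - 7 * d * h17

end Relations

/-! ### The upper bound -/

section Upper

open Polynomial

variable {F B : Type*} [Field F] [CommRing B] [Algebra F B]

theorem ev_mem (S : Subalgebra F B) {x : B} (hx : x ∈ S) (f : List ℤ) : ev f x ∈ S := by
  induction f with
  | nil => exact S.zero_mem
  | cons c f ih => exact S.add_mem (S.intCast_mem c) (S.mul_mem hx ih)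

theorem ev₂_mem (S : Subalgebra F B) {x y : B} (hx : x ∈ S) (hy : y ∈ S) (f : List (List ℤ)) :
    ev₂ f x y ∈ S := by
  induction f with
  | nil => exact S.zero_mem
  | cons c f ih => exact S.add_mem (ev_mem S hx c) (S.mul_mem hy ih)

/-- If `b²` is a combination of `1, b` over `F[a]`, every element of `F[a, b]` is one. -/
theorem exists_linear {a b : B} {u v : F[X]} (hb : b ^ 2 = Polynomial.aeval a u + Polynomial.aeval a v * b)
    {x : B} (hx : x ∈ Algebra.adjoin F {a, b}) :
    ∃ f g : F[X], x = Polynomial.aeval a f + Polynomial.aeval a g * b := by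
  induction hx using Algebra.adjoin_induction with
  | mem x hx =>
    rcases hx with rfl | rfl
    · exact ⟨Polynomial.X, 0, by simp⟩
    · exact ⟨0, 1, by simp⟩
  | algebraMap k => exact ⟨Polynomial.C k, 0, by simp⟩
  | add x y _ _ hx hy =>
    obtain ⟨f, g, rfl⟩ := hx
    obtain ⟨f', g', rfl⟩ := hy
    exact ⟨f + f', g + g', by simp only [map_add]; ring⟩
  | mul x y _ _ hx hy =>
    obtain ⟨f, g, rfl⟩ := hx
    obtain ⟨f', g', rfl⟩ := hy
    exact ⟨f * f' + g * g' * u, f * g' + g * f' + g * g' * v, by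
      simp only [map_add, map_mul]; linear_combination (Polynomial.aeval a g * Polynomial.aeval a g') * hb⟩

/-- If moreover `m(a) = 0` and `q(a) b ∈ F[a]`, then `aⁱ` for `i < deg m` and `aʲ b` for `j < deg q`
span `F[a, b]`. -/
theorem finite_and_finrank_le {a b : B} {m q r u v : F[X]} (hm : m.Monic) (hq : q.Monic)
    (hma : Polynomial.aeval a m = 0) (hqb : Polynomial.aeval a q * b = Polynomial.aeval a r)
    (hb : b ^ 2 = Polynomial.aeval a u + Polynomial.aeval a v * b) (htop : Algebra.adjoin F {a, b} = ⊤) :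
    Module.Finite F B ∧ Module.finrank F B ≤ m.natDegree + q.natDegree := by
  let φ : (degreeLT F m.natDegree × degreeLT F q.natDegree) →ₗ[F] B :=
    LinearMap.coprod ((Polynomial.aeval a).toLinearMap ∘ₗ (degreeLT F m.natDegree).subtype)
      (LinearMap.mulRight F b ∘ₗ (Polynomial.aeval a).toLinearMap ∘ₗ (degreeLT F q.natDegree).subtype)
  have hφ : Function.Surjective φ := by
    intro x
    obtain ⟨f, g, rfl⟩ := exists_linear hb (htop ▸ Algebra.mem_top : x ∈ Algebra.adjoin F {a, b})
    -- Reduce the coefficient of `b` modulo `q` first; the quotient contributes a multiple of `r`.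
    set f' := f + (g /ₘ q) * r
    refine ⟨(⟨f' %ₘ m, ?_⟩, ⟨g %ₘ q, ?_⟩), ?_⟩
    · rw [mem_degreeLT, ← degree_eq_natDegree hm.ne_zero]; exact degree_modByMonic_lt _ hm
    · rw [mem_degreeLT, ← degree_eq_natDegree hq.ne_zero]; exact degree_modByMonic_lt _ hq
    · have e1 := congrArg (Polynomial.aeval a) (modByMonic_add_div f' m)
      have e2 := congrArg (Polynomial.aeval a) (modByMonic_add_div g q)
      simp only [f', map_add, map_mul, hma] at e1 e2
      simp only [φ, LinearMap.coprod_apply, LinearMap.comp_apply, Submodule.subtype_apply,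
        AlgHom.toLinearMap_apply, LinearMap.mulRight_apply, f']
      linear_combination e1 + b * e2 - Polynomial.aeval a (g /ₘ q) * hqb
  have i1 : Module.Finite F (degreeLT F m.natDegree) :=
    Module.Finite.equiv (degreeLTEquiv F _).symm
  have i2 : Module.Finite F (degreeLT F q.natDegree) :=
    Module.Finite.equiv (degreeLTEquiv F _).symm
  refine ⟨Module.Finite.of_surjective φ hφ, ?_⟩
  refine (LinearMap.finrank_le_finrank_of_surjective hφ).trans_eq ?_
  rw [Module.finrank_prod, (degreeLTEquiv F _).finrank_eq, (degreeLTEquiv F _).finrank_eq]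
  simp

end Upper

/-! ### The point over `𝔽[t]/(G)` -/

/-- The polynomial `G`, monic of degree 28: the minimal polynomial of `a₁ + 2a₂`. -/
def gL : List ℤ :=
  [0, 5, 4, 16, 0, 13, 0, 1, 14, 12, 12, 3, 0, 8, 16, 9, 7, 13, 3, 13, 12, 13, 3, 1, 8, 11, 7, 3,
   1]

/-- The coordinate `a₁` as a polynomial in `t = a₁ + 2a₂`, modulo `G`. -/
def αL : List ℤ :=
  [2, 6, 2, 7, 5, 13, 6, 8, 6, 9, 15, 6, 1, 1, 6, 14, 4, 8, 4, 7, 4, 13, 8, 6, 4, 2, 4, 4]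

/-- The coordinate `a₂` as a polynomial in `t = a₁ + 2a₂`, modulo `G`. -/
def βL : List ℤ :=
  [16, 6, 16, 5, 6, 2, 14, 13, 14, 4, 1, 14, 8, 8, 14, 10, 15, 13, 15, 5, 15, 2, 13, 14, 15, 16,
   15, 15]

/-- The coordinate `a₃` as a polynomial in `t = a₁ + 2a₂`, modulo `G`. -/
def γL : List ℤ :=
  [4, 16, 9, 7, 4, 1, 10, 1, 15, 14, 16, 2, 3, 13, 5, 8, 5, 14, 8, 9, 12, 16, 16, 12, 8, 5, 13,
   10]

/-- The coordinate `a₄` as a polynomial in `t = a₁ + 2a₂`, modulo `G`. -/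
def δL : List ℤ :=
  [13, 2, 11, 16, 0, 4, 12, 1, 1, 4, 5, 9, 9, 4, 4, 0, 4, 4, 8, 3, 12, 9, 9, 13, 6, 4, 6, 2]

/-- The quotient of `e₁(α, β, γ, δ)` by `G`. -/
def K1 : List ℤ :=
  [8, 9, 13, 6, 15, 4, 14, 10, 12, 5, 11, 9, 2, 5, 0, 0, 11, 13, 4, 9, 5, 16, 2, 3, 15, 2, 3, 13,
   1, 11, 7, 15, 13, 16, 10, 9, 0, 11, 8, 13, 2, 0, 12, 6, 11, 8, 12, 12, 7, 0, 1, 10, 7, 7, 8, 7,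
   4, 6, 14, 7, 16, 3, 16, 6, 16, 6, 8, 16, 11, 9, 13, 9, 7, 0, 0, 2, 1, 7, 8, 8, 5]

/-- The quotient of `e₂(α, β, γ, δ)` by `G`. -/
def K2 : List ℤ :=
  [3, 1, 16, 5, 2, 9, 15, 16, 7, 10, 14, 15, 9, 7, 9, 1, 12, 3, 3, 8, 8, 11, 5, 2, 1, 10, 3, 14,
   13, 5, 14, 13, 9, 0, 16, 5, 10, 16, 12, 10, 10, 11, 7, 16, 12, 0, 3, 9, 12, 10, 13, 8, 3, 0,
   15, 4, 13, 8, 6, 13, 10, 3, 0, 5, 5, 10, 9, 0, 1, 1, 14, 13, 7, 9, 8, 15, 5, 14, 5, 12, 16]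

/-- The quotient of `e₃(α, β, γ, δ)` by `G`. -/
def K3 : List ℤ :=
  [16, 5, 16, 15, 1, 13, 4, 1, 10, 3, 11, 15, 2, 4, 1, 0, 11, 10, 12, 12, 16, 16, 13, 11, 10, 3,
   4, 15, 5, 11, 8, 0, 8, 14, 1, 11, 16, 16, 8, 3, 1, 14, 15, 7, 3, 6, 11, 11, 3, 5, 14, 3, 15,
   11, 2, 10, 6, 12, 8, 5, 10, 4, 2, 11, 2, 1, 16, 1, 14, 16, 0, 15, 16, 0, 4, 12, 5, 14, 12, 13,
   6]

/-- The quotient of `e₄(α, β, γ, δ)` by `G`. -/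
def K4 : List ℤ :=
  [1, 7, 15, 15, 6, 11, 6, 14, 11, 2, 12, 4, 13, 3, 16, 5, 9, 14, 0, 6, 1, 16, 12, 14, 4, 8, 12,
   6, 6, 8, 9, 5, 14, 11, 3, 2, 0, 14, 12, 13, 9, 11, 9, 4, 5, 2, 12, 6, 8, 5, 0, 11, 16, 13]

section Lower

variable {R : Type*} [CommRing R] (h17 : (17 : R) = 0) {t : R} (hG : ev gL t = 0)

include h17 hG in
theorem eq_zero_of_dvd (f k : List ℤ)
    (h : isZero (add f (smul (-1) (mul gL k))) = true) : ev f t = 0 := by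
  have h0 := ev_eq_zero h17 h t
  simpa [ev_add, ev_smul, ev_mul, hG] using h0

include h17 in
theorem α_add_two_β : ev αL t + 2 * ev βL t = t := by
  have h0 := ev_eq_zero h17 (f := add (add αL (smul 2 βL)) [0, -1]) (by decide +kernel) t
  simp only [ev_add, ev_smul] at h0
  simp only [ev.eq_def [0, -1], ev.eq_def [-1], ev.eq_def []] at h0
  push_cast at h0
  linear_combination h0

/-- Product of a list of polynomials, multiplied by the integer `k`. -/
def mon (k : ℤ) : List (List ℤ) → List ℤ
  | [] => [k]
  | f :: fs => mul f (mon k fs)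

/-- Sum of a list of polynomials. -/
def sum : List (List ℤ) → List ℤ
  | [] => []
  | f :: fs => add f (sum fs)

theorem ev_mon_nil (k : ℤ) (x : R) : ev (mon k []) x = k := by simp [mon, ev]

theorem ev_mon_cons (k : ℤ) (f : List ℤ) (fs : List (List ℤ)) (x : R) :
    ev (mon k (f :: fs)) x = ev f x * ev (mon k fs) x := ev_mul _ _ _

theorem ev_sum_nil (x : R) : ev (sum []) x = 0 := rfl

theorem ev_sum_cons (f : List ℤ) (fs : List (List ℤ)) (x : R) :
    ev (sum (f :: fs)) x = ev f x + ev (sum fs) x := ev_add _ _ _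

include h17 hG

theorem lower₁ : 3*(ev αL t)^2*(ev δL t)^2 + 3*(ev αL t)*(ev δL t)^2 + 3*(ev βL t)^3
    + 5*(ev βL t)^2 + 3*(ev βL t) - 2*(ev δL t)^2 = 0 := by
  have h := eq_zero_of_dvd h17 hG (sum [mon 3 [αL, αL, δL, δL], mon 3 [αL, δL, δL],
    mon 3 [βL, βL, βL], mon 5 [βL, βL], mon 3 [βL], mon (-2) [δL, δL]]) K1 (by decide +kernel)
  simp only [ev_sum_cons, ev_sum_nil, ev_mon_cons, ev_mon_nil] at h
  push_cast at h
  linear_combination h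

theorem lower₂ : 6*(ev αL t)^2*(ev γL t)*(ev δL t) + 9*(ev αL t)*(ev βL t)^2
    + 10*(ev αL t)*(ev βL t) + 6*(ev αL t)*(ev γL t)*(ev δL t) + 3*(ev αL t) - ev βL t
    - 4*(ev γL t)*(ev δL t) - 3 = 0 := by
  have h := eq_zero_of_dvd h17 hG (sum [mon 6 [αL, αL, γL, δL], mon 9 [αL, βL, βL],
    mon 10 [αL, βL], mon 6 [αL, γL, δL], mon 3 [αL], mon (-1) [βL], mon (-4) [γL, δL],
    mon (-3) []]) K2 (by decide +kernel)
  simp only [ev_sum_cons, ev_sum_nil, ev_mon_cons, ev_mon_nil] at h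
  push_cast at h
  linear_combination h

theorem lower₃ : 9*(ev αL t)^2*(ev βL t) + 3*(ev αL t)^2*(ev γL t)^2 + 6*(ev αL t)^2*(ev δL t)
    + 5*(ev αL t)^2 + 3*(ev αL t)*(ev γL t)^2 + 6*(ev αL t)*(ev δL t) - ev αL t
    - 3*(ev βL t)^2 - 19*(ev βL t) - 2*(ev γL t)^2 - 4*(ev δL t) - 7 = 0 := by
  have h := eq_zero_of_dvd h17 hG (sum [mon 9 [αL, αL, βL], mon 3 [αL, αL, γL, γL],
    mon 6 [αL, αL, δL], mon 5 [αL, αL], mon 3 [αL, γL, γL], mon 6 [αL, δL], mon (-1) [αL],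
    mon (-3) [βL, βL], mon (-19) [βL], mon (-2) [γL, γL], mon (-4) [δL], mon (-7) []])
    K3 (by decide +kernel)
  simp only [ev_sum_cons, ev_sum_nil, ev_mon_cons, ev_mon_nil] at h
  push_cast at h
  linear_combination h

theorem lower₄ : 3*(ev αL t)^3 + 6*(ev αL t)^2*(ev γL t) - 6*(ev αL t)*(ev βL t)
    + 6*(ev αL t)*(ev γL t) - 19*(ev αL t) - 3*(ev βL t) - 4*(ev γL t) + 7 = 0 := by
  have h := eq_zero_of_dvd h17 hG (sum [mon 3 [αL, αL, αL], mon 6 [αL, αL, γL],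
    mon (-6) [αL, βL], mon 6 [αL, γL], mon (-19) [αL], mon (-3) [βL], mon (-4) [γL],
    mon 7 []]) K4 (by decide +kernel)
  simp only [ev_sum_cons, ev_sum_nil, ev_mon_cons, ev_mon_nil] at h
  push_cast at h
  linear_combination h

end Lower

/-! ### The degree of the scheme -/

/-- The degree is 28 over every field of characteristic 17. -/
theorem finite_and_finrank_eq {F : Type*} [Field F] (h17 : (17 : F) = 0)
    (e₁ e₂ e₃ e₄ : MvPolynomial (Fin 4) F)
    (he₁ : e₁ = 3*(X 0)^2*(X 3)^2 + 3*(X 0)*(X 3)^2 + 3*(X 1)^3 + 5*(X 1)^2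
        + 3*(X 1) - 2*(X 3)^2)
    (he₂ : e₂ = 6*(X 0)^2*(X 2)*(X 3) + 9*(X 0)*(X 1)^2 + 10*(X 0)*(X 1)
        + 6*(X 0)*(X 2)*(X 3) + 3*(X 0) - X 1 - 4*(X 2)*(X 3) - 3)
    (he₃ : e₃ = 9*(X 0)^2*(X 1) + 3*(X 0)^2*(X 2)^2 + 6*(X 0)^2*(X 3) + 5*(X 0)^2
        + 3*(X 0)*(X 2)^2 + 6*(X 0)*(X 3) - X 0 - 3*(X 1)^2 - 19*(X 1)
        - 2*(X 2)^2 - 4*(X 3) - 7)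
    (he₄ : e₄ = 3*(X 0)^3 + 6*(X 0)^2*(X 2) - 6*(X 0)*(X 1) + 6*(X 0)*(X 2)
        - 19*(X 0) - 3*(X 1) - 4*(X 2) + 7) :
    Module.Finite F (MvPolynomial (Fin 4) F ⧸ Ideal.span {e₁, e₂, e₃, e₄}) ∧
    Module.finrank F (MvPolynomial (Fin 4) F ⧸ Ideal.span {e₁, e₂, e₃, e₄}) = 28 := by
  set I : Ideal (MvPolynomial (Fin 4) F) := Ideal.span {e₁, e₂, e₃, e₄} with hI
  let π : MvPolynomial (Fin 4) F →ₐ[F] MvPolynomial (Fin 4) F ⧸ I := Ideal.Quotient.mkₐ F I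
  have hπ : Function.Surjective π := Ideal.Quotient.mkₐ_surjective F I
  have hmem : ∀ e ∈ ({e₁, e₂, e₃, e₄} : Set (MvPolynomial (Fin 4) F)), π e = 0 := fun e he =>
    Ideal.Quotient.eq_zero_iff_mem.2 (Ideal.subset_span he)
  have hB : (17 : MvPolynomial (Fin 4) F ⧸ I) = 0 := by
    simpa only [map_ofNat, map_zero] using congrArg (algebraMap F (MvPolynomial (Fin 4) F ⧸ I)) h17
  have h₁ := hmem e₁ (by simp)
  have h₂ := hmem e₂ (by simp)
  have h₃ := hmem e₃ (by simp)
  have h₄ := hmem e₄ (by simp)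
  rw [he₁] at h₁
  rw [he₂] at h₂
  rw [he₃] at h₃
  rw [he₄] at h₄
  simp only [map_add, map_sub, map_mul, map_pow, map_ofNat] at h₁ h₂ h₃ h₄
  have htop : Algebra.adjoin F {π (X 0), π (X 1)} = ⊤ := by
    set S := Algebra.adjoin F {π (X 0), π (X 1)}
    have s0 : π (X 0) ∈ S := Algebra.subset_adjoin (by simp)
    have s1 : π (X 1) ∈ S := Algebra.subset_adjoin (by simp)
    have s2 : π (X 2) ∈ S := by
      rw [c_eq hB h₁ h₂ h₃ h₄]
      exact S.mul_mem (S.mul_mem (ofNat_mem S 9) (ev_mem S s0 _)) (ev₂_mem S s0 s1 _)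
    have s3 : π (X 3) ∈ S := by
      rw [d_eq hB h₁ h₂ h₃ h₄]
      exact S.mul_mem (S.mul_mem (ofNat_mem S 15) (S.pow_mem (ev_mem S s0 _) 2))
        (ev₂_mem S s0 s1 _)
    rw [← top_le_iff, ← (AlgHom.range_eq_top π).2 hπ, ← Algebra.map_top,
      ← MvPolynomial.adjoin_range_X, AlgHom.map_adjoin, Algebra.adjoin_le_iff]
    rintro _ ⟨_, ⟨i, rfl⟩, rfl⟩
    fin_cases i
    exacts [s0, s1, s2, s3]
  have hmd : (ev mL (Polynomial.X : Polynomial F)).Monic ∧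
      (ev mL (Polynomial.X : Polynomial F)).natDegree = 26 := monic_ev mL.dropLast
  have hqd : (ev qL (Polynomial.X : Polynomial F)).Monic ∧
      (ev qL (Polynomial.X : Polynomial F)).natDegree = 2 := monic_ev qL.dropLast
  have hGd : (ev gL (Polynomial.X : Polynomial F)).Monic ∧
      (ev gL (Polynomial.X : Polynomial F)).natDegree = 28 := monic_ev gL.dropLast
  obtain ⟨hfin, hle⟩ := finite_and_finrank_le (r := ev rL Polynomial.X)
    (u := ev uL Polynomial.X) (v := ev vL Polynomial.X) hmd.1 hqd.1
    (by rw [aeval_ev]; exact m_eq_zero hB h₁ h₂ h₃ h₄)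
    (by rw [aeval_ev, aeval_ev]; exact q_mul_b hB h₁ h₂ h₃ h₄)
    (by rw [aeval_ev, aeval_ev]; exact b_sq hB h₁ h₂ h₃ h₄) htop
  rw [hmd.2, hqd.2] at hle
  refine ⟨hfin, le_antisymm hle ?_⟩
  set G := ev gL (Polynomial.X : Polynomial F)
  set t := AdjoinRoot.root G
  have hG : ev gL t = 0 := by
    rw [← aeval_ev (F := F) gL t, AdjoinRoot.aeval_eq, AdjoinRoot.mk_self]
  have hA : (17 : AdjoinRoot G) = 0 := by
    simpa only [map_ofNat, map_zero] using congrArg (algebraMap F (AdjoinRoot G)) h17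
  let ψ : MvPolynomial (Fin 4) F →ₐ[F] AdjoinRoot G :=
    MvPolynomial.aeval ![ev αL t, ev βL t, ev γL t, ev δL t]
  have x0 : ψ (X 0) = ev αL t := by simp [ψ]
  have x1 : ψ (X 1) = ev βL t := by simp [ψ]
  have x2 : ψ (X 2) = ev γL t := by simp [ψ]
  have x3 : ψ (X 3) = ev δL t := by simp [ψ]
  have hψ : ∀ e ∈ I, ψ e = 0 := by
    intro e he
    refine (Ideal.span_le.2 ?_ : I ≤ RingHom.ker ψ) he
    rintro _ (rfl | rfl | rfl | rfl)
    · rw [he₁]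
      simp only [SetLike.mem_coe, RingHom.mem_ker, map_add, map_sub, map_mul, map_pow, map_ofNat,
        x0, x1, x3]
      exact lower₁ hA hG
    · rw [he₂]
      simp only [SetLike.mem_coe, RingHom.mem_ker, map_add, map_sub, map_mul, map_pow, map_ofNat,
        x0, x1, x2, x3]
      exact lower₂ hA hG
    · rw [he₃]
      simp only [SetLike.mem_coe, RingHom.mem_ker, map_add, map_sub, map_mul, map_pow, map_ofNat,
        x0, x1, x2, x3]
      exact lower₃ hA hG
    · rw [he₄]
      simp only [SetLike.mem_coe, RingHom.mem_ker, map_add, map_sub, map_mul, map_pow, map_ofNat,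
        x0, x1, x2]
      exact lower₄ hA hG
  let χ : (MvPolynomial (Fin 4) F ⧸ I) →ₐ[F] AdjoinRoot G := Ideal.Quotient.liftₐ I ψ hψ
  have hχ : Function.Surjective χ := by
    have ht : χ (π (X 0 + 2 * X 1)) = t := by
      have : χ (π (X 0 + 2 * X 1)) = ψ (X 0 + 2 * X 1) := rfl
      rw [this, map_add, map_mul, map_ofNat, x0, x1]
      exact α_add_two_β hA
    rw [← AlgHom.range_eq_top, ← top_le_iff, ← AdjoinRoot.adjoinRoot_eq_top,
      Algebra.adjoin_le_iff, Set.singleton_subset_iff]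
    exact ⟨_, ht⟩
  have := LinearMap.finrank_le_finrank_of_surjective (f := χ.toLinearMap) hχ
  rwa [(AdjoinRoot.powerBasis' hGd.1).finrank, AdjoinRoot.powerBasis'_dim, hGd.2] at this

end Bitangents

/-- The scheme of bitangents of `X₀(75)/w₂₅` of the form `x = a₁y + a₂z` has degree 28
over the field `𝔽₂₈₉ = GaloisField 17 2`: the quotient of `𝔽[a₁,a₂,a₃,a₄]` by the ideal
`(e₁,e₂,e₃,e₄)` is a 28-dimensional `𝔽`-vector space.  Here `X 0, X 1, X 2, X 3`
stand for `a₁, a₂, a₃, a₄`. -/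
theorem stmt_8
    (e₁ e₂ e₃ e₄ : MvPolynomial (Fin 4) (GaloisField 17 2))
    (he₁ : e₁ = 3*(X 0)^2*(X 3)^2 + 3*(X 0)*(X 3)^2 + 3*(X 1)^3 + 5*(X 1)^2
        + 3*(X 1) - 2*(X 3)^2)
    (he₂ : e₂ = 6*(X 0)^2*(X 2)*(X 3) + 9*(X 0)*(X 1)^2 + 10*(X 0)*(X 1)
        + 6*(X 0)*(X 2)*(X 3) + 3*(X 0) - X 1 - 4*(X 2)*(X 3) - 3)
    (he₃ : e₃ = 9*(X 0)^2*(X 1) + 3*(X 0)^2*(X 2)^2 + 6*(X 0)^2*(X 3) + 5*(X 0)^2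
        + 3*(X 0)*(X 2)^2 + 6*(X 0)*(X 3) - X 0 - 3*(X 1)^2 - 19*(X 1)
        - 2*(X 2)^2 - 4*(X 3) - 7)
    (he₄ : e₄ = 3*(X 0)^3 + 6*(X 0)^2*(X 2) - 6*(X 0)*(X 1) + 6*(X 0)*(X 2)
        - 19*(X 0) - 3*(X 1) - 4*(X 2) + 7) :
    FiniteDimensional (GaloisField 17 2)
        (MvPolynomial (Fin 4) (GaloisField 17 2) ⧸ Ideal.span {e₁, e₂, e₃, e₄}) ∧
    Module.finrank (GaloisField 17 2)
        (MvPolynomial (Fin 4) (GaloisField 17 2) ⧸ Ideal.span {e₁, e₂, e₃, e₄}) = 28 := by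
  have h17 : (17 : GaloisField 17 2) = 0 := by
    exact_mod_cast CharP.cast_eq_zero (GaloisField 17 2) 17
  exact Bitangents.finite_and_finrank_eq h17 e₁ e₂ e₃ e₄ he₁ he₂ he₃ he₄
end

section
/- Let f(u) = −u⁶ − 14u⁵ + 5u⁴ + 20u³ − 95u² − 134u + 139 ∈ ℚ[u], and let K be the splitting field of f over ℚ. Then K is a Galois extension of ℚ of degree 12, and Gal(K/ℚ) is isomorphic to the dihedral group of order 12. -/
/-!
The sextic `f` generates the compositum of `ℚ(∛10)` and `ℚ(√5)`: if `f(r) = 0`, there are explicit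
polynomials `A`, `B` over `ℚ` of degree 5 such that `α = A(r)` satisfies `α³ = 10`, `s = B(r)`
satisfies `s² = 5`, and `r` is an explicit `ℚ`-linear combination of the products `αⁱsʲ`
(`exists_generators`). Hence the splitting field `K` of `f` contains a root of each of the
irreducible polynomials `X³ - 10` and `X² - 5`; being normal, it contains all their roots, and these
generate `K`. So `K` is the splitting field of `(X³ - 10)(X² - 5)`, and `Gal(K/ℚ)` embeds in the
product of the Galois groups of the two factors, which have order at most `3!` and `2!`.

Conversely `[K : ℚ]` is divisible by 3, because of `∛10`, and by 4, because `K` contains `√5` and,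
as a rational expression in a primitive cube root of unity, `√-3`, which is not in `ℚ(√5)`
(`four_dvd_finrank`). Hence `[K : ℚ] = 12`, every bound above is attained, and
`Gal(K/ℚ) ≃ S₃ × C₂`, which is the dihedral group of order 12.
-/

open Polynomial

/-- The coefficients of `A` and `B` come from interpolating `∛10` and `√5` at the roots of the
sextic. -/
lemma exists_generators {K : Type*} [Field K] [CharZero K] (r : K)
    (hr : -r ^ 6 - 14 * r ^ 5 + 5 * r ^ 4 + 20 * r ^ 3 - 95 * r ^ 2 - 134 * r + 139 = 0) :
    ∃ α s : K, α ^ 3 = 10 ∧ s ^ 2 = 5 ∧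
      r = -7 / 3 - 4 / 3 * α - 1 / 3 * α ^ 2 - 2 / 3 * s - 2 / 3 * (s * α)
        - 4 / 15 * (s * α ^ 2) := by
  refine ⟨13207 / 9164 + 10579 / 9164 * r - 607 / 2291 * r ^ 2 - 701 / 4582 * r ^ 3
      + 2577 / 9164 * r ^ 4 + 187 / 9164 * r ^ 5,
    -367 / 158 + 181 / 632 * r + 5 / 316 * r ^ 2 - 39 / 158 * r ^ 3
      - 41 / 316 * r ^ 4 - 5 / 632 * r ^ 5,
    ?_, ?_, ?_⟩
  · linear_combination (-38792784523 / 769582602944 + 2427973429 / 769582602944 * r - 706053693 / 384791301472 * r ^ 2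
      - 172613291 / 24049456342 * r ^ 3 - 3236695 / 304423498 * r ^ 4
      + 345685129 / 384791301472 * r ^ 5 + 841190287 / 384791301472 * r ^ 6
      - 277006653 / 192395650736 * r ^ 7 - 178796497 / 769582602944 * r ^ 8
      - 6539203 / 769582602944 * r ^ 9) * hr
  · linear_combination (71 / 24964 - 341 / 49928 * r - 1829 / 399424 * r ^ 2 - 235 / 199712 * r ^ 3
      - 25 / 399424 * r ^ 4) * hr
  · linear_combination -(28518063 / 33171663920 - 442733221 / 199029983520 * r - 221829703 / 49757495880 * r ^ 2
      - 229330799 / 49757495880 * r ^ 3 + 7545 / 83978896 * r ^ 4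
      + 981257 / 2487874794 * r ^ 5 - 7356573 / 33171663920 * r ^ 6
      - 7100513 / 33171663920 * r ^ 7 - 30107 / 1143850480 * r ^ 8
      - 34969 / 39805996704 * r ^ 9) * hr

lemma rat_sq_ne_five (b : ℚ) : b ^ 2 ≠ 5 := by
  intro h
  have h5 : ¬ IsSquare (5 : ℚ) := by norm_num
  exact h5 ⟨b, by rw [← h, sq]⟩

lemma rat_cube_ne_ten (b : ℚ) : b ^ 3 ≠ 10 := by
  intro h
  refine irrational_nrt_of_notint_nrt (x := (b : ℝ)) 3 10 (by exact_mod_cast h) ?_ (by norm_num)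
    ⟨b, rfl⟩
  rintro ⟨y, hy⟩
  have hy3 : y ^ 3 = 10 := by
    have : (y : ℝ) ^ 3 = 10 := by rw [← hy]; exact_mod_cast h
    exact_mod_cast this
  -- `2 ^ 3 < 10 < 3 ^ 3`
  have h2 : 2 < y := by
    by_contra! hle
    nlinarith [sq_nonneg (y + 1), sq_nonneg y]
  have h3 : y < 3 := by
    by_contra! hle
    nlinarith [sq_nonneg (y + 1), sq_nonneg y]
  omega

lemma irreducible_cubic : Irreducible (X ^ 3 - C 10 : ℚ[X]) :=
  X_pow_sub_C_irreducible_of_prime Nat.prime_three rat_cube_ne_ten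

lemma irreducible_quadratic : Irreducible (X ^ 2 - C 5 : ℚ[X]) :=
  X_pow_sub_C_irreducible_of_prime Nat.prime_two rat_sq_ne_five

lemma minpoly_cbrt {K : Type*} [Field K] [Algebra ℚ K] {α : K} (hα : α ^ 3 = 10) :
    minpoly ℚ α = X ^ 3 - C 10 :=
  (minpoly.eq_of_irreducible_of_monic irreducible_cubic (by simp [hα])
    (monic_X_pow_sub_C _ (by norm_num))).symm

lemma minpoly_sqrt {K : Type*} [Field K] [Algebra ℚ K] {s : K} (hs : s ^ 2 = 5) :
    minpoly ℚ s = X ^ 2 - C 5 :=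
  (minpoly.eq_of_irreducible_of_monic irreducible_quadratic (by simp [hs])
    (monic_X_pow_sub_C _ (by norm_num))).symm

lemma exists_eq_add_mul_of_mem_adjoin {K : Type*} [Field K] [Algebra ℚ K] {s x : K}
    (hs : s ^ 2 = 5) (hx : x ∈ IntermediateField.adjoin ℚ {s}) :
    ∃ a b : ℚ, x = a + b * s := by
  have : CharZero K := algebraRat.charZero K
  have hint : IsIntegral ℚ s :=
    ⟨X ^ 2 - C 5, monic_X_pow_sub_C _ (by norm_num), by simp [hs]⟩
  rw [← IntermediateField.mem_toSubalgebra,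
    IntermediateField.adjoin_simple_toSubalgebra_of_isAlgebraic hint.isAlgebraic] at hx
  induction hx using Algebra.adjoin_induction with
  | mem x hx => exact ⟨0, 1, by simpa using hx⟩
  | algebraMap q => exact ⟨q, 0, by simp⟩
  | add x y _ _ hx hy =>
    obtain ⟨a, b, rfl⟩ := hx
    obtain ⟨c, d, rfl⟩ := hy
    exact ⟨a + c, b + d, by push_cast; ring⟩
  | mul x y _ _ hx hy =>
    obtain ⟨a, b, rfl⟩ := hx
    obtain ⟨c, d, rfl⟩ := hy
    exact ⟨a * c + 5 * b * d, a * d + b * c, by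
      push_cast; linear_combination (b : K) * d * hs⟩

lemma sqrt_neg_three_notMem {K : Type*} [Field K] [Algebra ℚ K] {s t : K}
    (hs : s ^ 2 = 5) (ht : t ^ 2 = -3) : t ∉ IntermediateField.adjoin ℚ {s} := by
  intro hmem
  have : CharZero K := algebraRat.charZero K
  obtain ⟨a, b, rfl⟩ := exists_eq_add_mul_of_mem_adjoin hs hmem
  -- Comparing coordinates: the coefficient `2ab` of `s` vanishes, since `s` is irrational.
  have hab : a * b = 0 := by
    by_contra hne
    apply rat_sq_ne_five ((-3 - a ^ 2 - 5 * b ^ 2) / (2 * (a * b)))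
    have hne' : (2 * (a * b : ℚ) : K) ≠ 0 := by exact_mod_cast mul_ne_zero two_ne_zero hne
    have h1 : s = (((-3 - a ^ 2 - 5 * b ^ 2) / (2 * (a * b)) : ℚ) : K) := by
      push_cast at hne' ⊢
      rw [eq_div_iff hne']
      linear_combination ht - (b : K) ^ 2 * hs
    rw [h1] at hs
    exact_mod_cast hs
  have h2 : a ^ 2 + 5 * b ^ 2 = -3 := by
    have habK : (a : K) * b = 0 := by exact_mod_cast hab
    have : (a : K) ^ 2 + 5 * (b : K) ^ 2 = -3 := by
      linear_combination ht - (b : K) ^ 2 * hs - 2 * s * habK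
    exact_mod_cast this
  nlinarith [sq_nonneg a, sq_nonneg b]

lemma four_dvd_finrank {K : Type*} [Field K] [Algebra ℚ K] [FiniteDimensional ℚ K] {s t : K}
    (hs : s ^ 2 = 5) (ht : t ^ 2 = -3) : 4 ∣ Module.finrank ℚ K := by
  have hmem := sqrt_neg_three_notMem hs ht
  have hint : IsIntegral ℚ s := IsIntegral.of_finite ℚ s
  have h1 : Module.finrank ℚ (IntermediateField.adjoin ℚ {s}) = 2 := by
    rw [IntermediateField.adjoin.finrank hint, minpoly_sqrt hs, natDegree_X_pow_sub_C]
  have hirr : Irreducible (X ^ 2 - C (-3) : (IntermediateField.adjoin ℚ {s})[X]) := by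
    refine X_pow_sub_C_irreducible_of_prime Nat.prime_two fun b hb => ?_
    have hb' : (b : K) ^ 2 = t ^ 2 := by
      have h := congrArg (algebraMap _ K) hb
      rw [map_pow, map_neg, map_ofNat] at h
      rw [ht]
      exact h
    rcases sq_eq_sq_iff_eq_or_eq_neg.mp hb' with h | h
    · exact hmem (h ▸ b.2)
    · exact hmem (by rw [← neg_neg t, ← h]; exact neg_mem b.2)
  have h2 : 2 ∣ Module.finrank (IntermediateField.adjoin ℚ {s}) K := by
    have h := minpoly.degree_dvd (K := IntermediateField.adjoin ℚ {s})
      (IsIntegral.of_finite (IntermediateField.adjoin ℚ {s}) t)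
    rwa [← minpoly.eq_of_irreducible_of_monic hirr
      (by simp [ht, map_ofNat])
      (monic_X_pow_sub_C _ (by norm_num)), natDegree_X_pow_sub_C] at h
  rw [← Module.finrank_mul_finrank ℚ (IntermediateField.adjoin ℚ {s}) K, h1]
  exact Nat.mul_dvd_mul_left 2 h2

/-- A field containing all three cube roots of 10 contains a primitive cube root of unity `ω`, and
`2ω + 1` is a square root of `-3`. -/
lemma exists_sqrt_neg_three {K : Type*} [Field K] [Algebra ℚ K]
    (h : ((X ^ 3 - C 10 : ℚ[X]).map (algebraMap ℚ K)).Splits) : ∃ t : K, t ^ 2 = -3 := by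
  have : CharZero K := algebraRat.charZero K
  have hcard := card_rootSet_eq_natDegree irreducible_cubic.separable h
  rw [natDegree_X_pow_sub_C] at hcard
  obtain ⟨⟨a, ha⟩, ⟨b, hb⟩, hab⟩ := Fintype.exists_pair_of_one_lt_card
    (α := (X ^ 3 - C 10 : ℚ[X]).rootSet K) (by omega)
  have ha3 : a ^ 3 = 10 := by simpa [sub_eq_zero] using (mem_rootSet.mp ha).2
  have hb3 : b ^ 3 = 10 := by simpa [sub_eq_zero] using (mem_rootSet.mp hb).2
  have hne : a - b ≠ 0 := fun h => hab (Subtype.ext (sub_eq_zero.mp h))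
  have hb0 : b ≠ 0 := by rintro rfl; norm_num at hb3
  have hq : a ^ 2 + a * b + b ^ 2 = 0 := by
    apply mul_left_cancel₀ hne
    linear_combination ha3 - hb3
  refine ⟨2 * (a / b) + 1, ?_⟩
  field_simp
  linear_combination 4 * hq

lemma card_gal_le {p : ℚ[X]} {n : ℕ} (hn : p.natDegree = n) : Nat.card p.Gal ≤ n.factorial := by
  have : Fact ((p.map (algebraMap ℚ p.SplittingField)).Splits) := ⟨SplittingField.splits p⟩
  refine (Nat.card_le_card_of_injective _
    (Gal.galActionHom_injective p p.SplittingField)).trans ?_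
  rw [Nat.card_perm]
  exact Nat.factorial_le (hn ▸ ncard_rootSet_le p _)

/-- The hexagon's dihedral group as `S₃ × C₂`: rotation by `60°` acts as a 3-cycle on the three long
diagonals and swaps the two inscribed triangles. -/
def dihedralHom : DihedralGroup 6 →* Equiv.Perm (Fin 3) × ℤˣ where
  toFun
    | .r i => (finRotate 3 ^ i.val, (-1) ^ i.val)
    | .sr i => (Equiv.swap 0 1 * finRotate 3 ^ i.val, (-1) ^ i.val)
  map_one' := by decide
  map_mul' := by decide

lemma dihedralHom_bijective : Function.Bijective dihedralHom := by
  rw [Fintype.bijective_iff_injective_and_card]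
  exact ⟨by decide, by decide⟩

/-- The theorem for an arbitrary splitting field `K` and an arbitrary `ℚ`-algebra structure on it:
`SplittingField f` carries two such structures that are equal only propositionally. -/
lemma galois_of_isSplittingField {K : Type*} [Field K] [Algebra ℚ K] (f : ℚ[X])
    [IsSplittingField ℚ K f]
    (hf : f = -X^6 - 14*X^5 + 5*X^4 + 20*X^3 - 95*X^2 - 134*X + 139) :
    IsGalois ℚ K ∧ Module.finrank ℚ K = 12 ∧ Nonempty (Gal(K/ℚ) ≃* DihedralGroup 6) := by
  have : CharZero K := algebraRat.charZero K
  have hnormal : Normal ℚ K := Normal.of_isSplittingField f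
  have : FiniteDimensional ℚ K := IsSplittingField.finiteDimensional K f
  have hgal : IsGalois ℚ K := ⟨⟩
  have hroot : ∀ r : K, aeval r f = 0 → ∃ α s : K,
      α ^ 3 = 10 ∧ s ^ 2 = 5 ∧
      r = -7 / 3 - 4 / 3 * α - 1 / 3 * α ^ 2 - 2 / 3 * s - 2 / 3 * (s * α)
        - 4 / 15 * (s * α ^ 2) := by
    intro r hr
    apply exists_generators
    simpa [hf, map_ofNat] using hr
  have hdeg : f.natDegree = 6 := by
    rw [hf]; compute_degree!
  obtain ⟨r, hr⟩ : ∃ r : K, aeval r f = 0 := by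
    have h := (IsSplittingField.splits K f).exists_eval_eq_zero (by
      rw [degree_map]
      exact (natDegree_pos_iff_degree_pos.mp (by omega)).ne')
    simpa [eval_map_algebraMap] using h
  obtain ⟨α, s, hα, hs, -⟩ := hroot r hr
  have hsplit3 : ((X ^ 3 - C 10 : ℚ[X]).map (algebraMap ℚ K)).Splits :=
    minpoly_cbrt hα ▸ hnormal.splits α
  have hsplit2 : ((X ^ 2 - C 5 : ℚ[X]).map (algebraMap ℚ K)).Splits :=
    minpoly_sqrt hs ▸ hnormal.splits s
  have hne : (X ^ 3 - C 10 : ℚ[X]) * (X ^ 2 - C 5) ≠ 0 :=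
    mul_ne_zero irreducible_cubic.ne_zero irreducible_quadratic.ne_zero
  have hsf : IsSplittingField ℚ K ((X ^ 3 - C 10 : ℚ[X]) * (X ^ 2 - C 5)) := by
    refine ⟨by rw [Polynomial.map_mul]; exact hsplit3.mul hsplit2, ?_⟩
    rw [eq_top_iff, ← IsSplittingField.adjoin_rootSet K f]
    refine Algebra.adjoin_le fun x hx => ?_
    obtain ⟨a, b, ha, hb, hx⟩ := hroot x (mem_rootSet.mp hx).2
    have ha' : a ∈ Algebra.adjoin ℚ
        (((X ^ 3 - C 10 : ℚ[X]) * (X ^ 2 - C 5)).rootSet K) :=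
      Algebra.subset_adjoin (mem_rootSet.mpr ⟨hne, by simp [ha]⟩)
    have hb' : b ∈ Algebra.adjoin ℚ
        (((X ^ 3 - C 10 : ℚ[X]) * (X ^ 2 - C 5)).rootSet K) :=
      Algebra.subset_adjoin (mem_rootSet.mpr ⟨hne, by simp [hb]⟩)
    have hx' : x = algebraMap ℚ K (-7 / 3) + (-4 / 3 : ℚ) • a
        + (-1 / 3 : ℚ) • a ^ 2 + (-2 / 3 : ℚ) • b + (-2 / 3 : ℚ) • (b * a)
        + (-4 / 15 : ℚ) • (b * a ^ 2) := by
      simp only [Algebra.smul_def, hx, eq_ratCast]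
      push_cast
      ring
    rw [SetLike.mem_coe, hx']
    have hs := fun (q : ℚ) {y} hy => Subalgebra.smul_mem (x := y) (Algebra.adjoin ℚ
        (((X ^ 3 - C 10 : ℚ[X]) * (X ^ 2 - C 5)).rootSet K)) hy q
    exact add_mem (add_mem (add_mem (add_mem (add_mem (Subalgebra.algebraMap_mem _ _) (hs _ ha'))
      (hs _ (pow_mem ha' 2))) (hs _ hb')) (hs _ (mul_mem hb' ha')))
      (hs _ (mul_mem hb' (pow_mem ha' 2)))
  let φ : Gal(K/ℚ) →* (X ^ 3 - C 10 : ℚ[X]).Gal × (X ^ 2 - C 5 : ℚ[X]).Gal :=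
    (Gal.restrictProd _ _).comp (AlgEquiv.autCongr (IsSplittingField.algEquiv K
      ((X ^ 3 - C 10 : ℚ[X]) * (X ^ 2 - C 5)))).toMonoidHom
  have hφ : Function.Injective φ :=
    (Gal.restrictProd_injective _ _).comp (AlgEquiv.autCongr _).injective
  have hcard : Nat.card Gal(K/ℚ) = Module.finrank ℚ K :=
    IsGalois.card_aut_eq_finrank ℚ K
  have h3 : Nat.card (X ^ 3 - C 10 : ℚ[X]).Gal ≤ 6 := card_gal_le natDegree_X_pow_sub_C
  have h2 : Nat.card (X ^ 2 - C 5 : ℚ[X]).Gal ≤ 2 := card_gal_le natDegree_X_pow_sub_C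
  have hle := Nat.card_le_card_of_injective φ hφ
  rw [Nat.card_prod] at hle
  have hdvd : 12 ∣ Module.finrank ℚ K := by
    obtain ⟨t, ht⟩ := exists_sqrt_neg_three hsplit3
    have h4 := four_dvd_finrank hs ht
    have h3 := minpoly.degree_dvd (K := ℚ) (IsIntegral.of_finite ℚ α)
    rw [minpoly_cbrt hα, natDegree_X_pow_sub_C] at h3
    omega
  have hge := Nat.le_of_dvd Module.finrank_pos hdvd
  have e3 : Nat.card (X ^ 3 - C 10 : ℚ[X]).Gal = 6 := by nlinarith
  have e2 : Nat.card (X ^ 2 - C 5 : ℚ[X]).Gal = 2 := by nlinarith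
  have e12 : Module.finrank ℚ K = 12 := by
    rw [e3, e2] at hle
    omega
  refine ⟨hgal, e12, ?_⟩
  have hφb : Function.Bijective φ :=
    (Nat.bijective_iff_injective_and_card φ).mpr ⟨hφ, by rw [Nat.card_prod, e3, e2, hcard, e12]⟩
  have : Fact (((X ^ 3 - C 10 : ℚ[X]).map (algebraMap ℚ K)).Splits) := ⟨hsplit3⟩
  have hroots : Nat.card ((X ^ 3 - C 10 : ℚ[X]).rootSet K) = 3 := by
    rw [Nat.card_eq_fintype_card, card_rootSet_eq_natDegree irreducible_cubic.separable hsplit3,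
      natDegree_X_pow_sub_C]
  have hψ : Function.Bijective (Gal.galActionHom (X ^ 3 - C 10 : ℚ[X]) K) :=
    (Nat.bijective_iff_injective_and_card _).mpr
      ⟨Gal.galActionHom_injective _ _, by rw [Nat.card_perm, hroots, e3]; rfl⟩
  have : Fact (Nat.Prime 2) := ⟨Nat.prime_two⟩
  let ε : (X ^ 3 - C 10 : ℚ[X]).Gal ≃* Equiv.Perm (Fin 3) :=
    (MulEquiv.ofBijective _ hψ).trans (Finite.equivFinOfCardEq hroots).permCongrHom
  let δ : (X ^ 2 - C 5 : ℚ[X]).Gal ≃* ℤˣ := mulEquivOfPrimeCardEq e2 (by simp)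
  exact ⟨((MulEquiv.ofBijective φ hφb).trans (ε.prodCongr δ)).trans
    (MulEquiv.ofBijective dihedralHom dihedralHom_bijective).symm⟩

/-- The splitting field of `-u⁶ - 14u⁵ + 5u⁴ + 20u³ - 95u² - 134u + 139` is a Galois
extension of `ℚ` of degree 12 with Galois group the dihedral group of order 12. -/
theorem stmt_9 (f : ℚ[X])
    (hf : f = -X^6 - 14*X^5 + 5*X^4 + 20*X^3 - 95*X^2 - 134*X + 139) :
    IsGalois ℚ f.SplittingField ∧
    Module.finrank ℚ f.SplittingField = 12 ∧
    Nonempty (f.Gal ≃* DihedralGroup 6) := by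
  have h := @galois_of_isSplittingField f.SplittingField _ _ f (IsSplittingField.splittingField f) hf
  refine ⟨?_, ?_, h.2.2⟩
  · convert h.1
  · convert h.2.1
end

section
/- Let u ∈ ℂ satisfy u³ + 16 = 0, and let L = x − u·y − 2z, a linear form on ℙ³ with coordinates (x : y : z : w). Then the set V of points P ∈ ℙ³(ℂ) satisfying f₁(P) = f₂(P) = L(P) = 0 has exactly 3 elements, and at each P ∈ V the coefficient vector of L is a ℂ-linear combination of the gradient vectors ∇f₁(P) and ∇f₂(P). (That is, the plane x = u·y + 2z is a tritangent plane to X₀(54).) -/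
/-!
Substituting `x = u y + 2 z` into `g₂` gives `w (u y + 3 z) = y z`, and from this every point of the
plane section has `z ≠ 0`; normalise `z = 1` and put `t = u y`. Eliminating `w = y / (t + 3)` from
`g₁` and using `u³ = -16` gives `16 (t + 3)³ g₁ = q(t)²` with `q = t³ + 12 t² + 36 t + 36`. That the
restriction of `g₁` is a perfect square is the tritangency, and since `q` is separable its three
roots give exactly three points `pt u t` (`section_iff`, `ncard_roots`). As `t + 3` is invertible
modulo `q`, the coordinates of these points, and the multipliers expressing the form `x - u y - 2 z`
through the gradients, are polynomials in `u` and `t` (`tangent_at`).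
-/


open MvPolynomial

/-- First defining equation of the canonical model of `X₀(54)` in `ℙ³`,
with coordinates `(x : y : z : w) = (X 0 : X 1 : X 2 : X 3)`. -/
noncomputable def g₁ : MvPolynomial (Fin 4) ℂ :=
  (X 0)^2*(X 2) - (X 0)*(X 2)^2 - (X 1)^3 + (X 1)^2*(X 3) - 3*(X 1)*(X 3)^2
    + (X 2)^3 + 3*(X 3)^3

/-- Second defining equation of the canonical model of `X₀(54)` in `ℙ³`. -/
noncomputable def g₂ : MvPolynomial (Fin 4) ℂ :=
  (X 0)*(X 3) - (X 1)*(X 2) + (X 2)*(X 3)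

/-- The common zero set of `g₁`, `g₂` and the plane, in terms of coordinates. -/
def OnSection (u : ℂ) (v : Fin 4 → ℂ) : Prop :=
  eval v g₁ = 0 ∧ eval v g₂ = 0 ∧ ∑ j, (![1, -u, -2, 0] : Fin 4 → ℂ) j * v j = 0

lemma onSection_iff (u : ℂ) (v : Fin 4 → ℂ) : OnSection u v ↔
    (v 0)^2*(v 2) - (v 0)*(v 2)^2 - (v 1)^3 + (v 1)^2*(v 3) - 3*(v 1)*(v 3)^2
      + (v 2)^3 + 3*(v 3)^3 = 0 ∧
    (v 0)*(v 3) - (v 1)*(v 2) + (v 2)*(v 3) = 0 ∧ v 0 - u * v 1 - 2 * v 2 = 0 := by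
  have h : ∑ j, (![1, -u, -2, 0] : Fin 4 → ℂ) j * v j = v 0 - u * v 1 - 2 * v 2 := by
    simp [Fin.sum_univ_four]; ring
  rw [OnSection, h]
  simp [g₁, g₂]

/-- The roots of the cubic `q`, whose square is the restriction of `g₁` to the plane section of
the quadric `g₂ = 0`, up to the factor `16 (t + 3)³`. -/
def tangencyRoots : Set ℂ := {t | t^3 + 12*t^2 + 36*t + 36 = 0}

/-- The point of the plane section with `z = 1` and `u y = t`. The coordinate `w = y / (t + 3)` is
written as a polynomial in `u` and `t` by means of `u³ = -16` and `q(t) = 0`. -/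
noncomputable def pt (u t : ℂ) : Fin 4 → ℂ :=
  ![t + 2, -u^2 * t / 16, 1, -u^2 * (t^2 + 9*t + 12) / 48]

lemma pt_ne_zero (u t : ℂ) : pt u t ≠ 0 := fun h => by
  simpa [pt] using congrFun h 2

open Polynomial in
lemma ncard_roots : tangencyRoots.ncard = 3 := by
  let q : ℂ[X] := Polynomial.X^3 + Polynomial.C 12 * Polynomial.X^2
    + Polynomial.C 36 * Polynomial.X + Polynomial.C 36
  have hdeg : q.natDegree = 3 := by
    simp only [q]; compute_degree!
  have hq0 : q ≠ 0 := fun h => by simp [h] at hdeg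
  have hsep : q.Separable := by
    -- Bézout coefficients from the Euclidean algorithm for `q` and its derivative
    refine ⟨Polynomial.C (1/18) * Polynomial.X + Polynomial.C (13/36),
      Polynomial.C (-1/54) * Polynomial.X^2 + Polynomial.C (-7/36) * Polynomial.X
        + Polynomial.C (-1/3), ?_⟩
    apply Polynomial.funext
    intro r
    simp [q]
    ring
  have h := Polynomial.card_rootSet_eq_natDegree (K := ℂ) hsep (IsAlgClosed.splits _)
  rw [hdeg, Fintype.card_eq_nat_card, Nat.card_coe_set_eq] at h
  rw [← h]
  congr 1
  ext t
  rw [Polynomial.mem_rootSet]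
  simp [tangencyRoots, hq0, q]

lemma section_iff {u : ℂ} (hu : u^3 + 16 = 0) {v : Fin 4 → ℂ} (hv : v ≠ 0) :
    OnSection u v ↔ ∃ t ∈ tangencyRoots, ∃ a : ℂ, a ≠ 0 ∧ v = a • pt u t := by
  rw [onSection_iff]
  constructor
  · rintro ⟨h1, h2, h3⟩
    have hx : v 0 = u * v 1 + 2 * v 2 := by linear_combination h3
    have hu0 : u ≠ 0 := by rintro rfl; norm_num at hu
    have hz : v 2 ≠ 0 := by
      intro hz
      have hyw : v 1 * v 3 = 0 := by
        apply mul_left_cancel₀ hu0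
        rw [hx, hz] at h2
        linear_combination h2
      have hy3 : v 1 ^ 3 = 3 * v 3 ^ 3 := by
        rw [hz] at h1
        linear_combination -h1 + (v 1 - 3 * v 3) * hyw
      have hyz : v 1 = 0 ∧ v 3 = 0 := by
        rcases mul_eq_zero.mp hyw with h | h
        · refine ⟨h, ?_⟩
          simpa [h] using hy3
        · refine ⟨?_, h⟩
          simpa [h] using hy3
      apply hv
      ext j
      fin_cases j <;> simp [hx, hz, hyz.1, hyz.2]
    obtain ⟨y, hy⟩ : ∃ y, v 1 = v 2 * y := ⟨v 1 / v 2, by field_simp⟩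
    obtain ⟨w, hw⟩ : ∃ w, v 3 = v 2 * w := ⟨v 3 / v 2, by field_simp⟩
    have hwD : w * (u * y + 3) = y := by
      apply mul_left_cancel₀ (pow_ne_zero 2 hz)
      rw [hx, hy, hw] at h2
      linear_combination h2
    have hf : (u*y+2)^2 - (u*y+2) - y^3 + y^2*w - 3*y*w^2 + 1 + 3*w^3 = 0 := by
      apply mul_left_cancel₀ (pow_ne_zero 3 hz)
      rw [hx, hy, hw] at h1
      linear_combination h1
    obtain ⟨t, ht⟩ : ∃ t, t = u * y := ⟨_, rfl⟩
    rw [← ht] at hwD hf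
    have hyt : y = -u^2 * t / 16 := by
      rw [ht]; linear_combination (y / 16) * hu
    have hq : t^3 + 12*t^2 + 36*t + 36 = 0 := by
      have ht3 : -16 * w^3 * (t+3)^3 = t^3 := by
        have : (w * (t+3))^3 = y^3 := by rw [hwD]
        rw [ht] at this ⊢
        linear_combination -16 * this - y^3 * hu
      rw [← hwD] at hf
      refine pow_eq_zero_iff two_ne_zero |>.mp ?_
      linear_combination 16 * (t+3)^3 * hf
        - ((t+3)^3 - (t+3)^2 + 3*(t+3) - 3) * ht3
    refine ⟨t, hq, v 2, hz, ?_⟩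
    -- `(t + 3) (t² + 9 t + 9) = q(t) - 9` inverts `t + 3`
    have hwt : w = -u^2 * (t^2 + 9*t + 12) / 48 := by
      rw [hyt] at hwD
      linear_combination (-(t^2+9*t+9)/9) * hwD + (w / 9 + u^2 / 144) * hq
    ext j
    fin_cases j
    · simp [pt, hx, hy, ht]; ring
    · simp [pt, hy, hyt]
    · simp [pt]
    · simp [pt, hw, hwt]
  · rintro ⟨t, ht, a, -, rfl⟩
    have ht : t^3 + 12*t^2 + 36*t + 36 = 0 := ht
    simp only [pt, Pi.smul_apply, smul_eq_mul, Matrix.cons_val]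
    refine ⟨?_, ?_, ?_⟩
    · grind
    · grind
    · grind

/-- The multipliers of the two gradients are found by solving the `x`- and `w`-components of the
tangency relation modulo `q` and `u³ + 16`; scaling the representative by `a` divides them by `a²`
and `a`, as `g₁` is a cubic and `g₂` a quadric. -/
lemma tangent_at {u t a : ℂ} (hu : u^3 + 16 = 0) (ht : t ∈ tangencyRoots) (ha : a ≠ 0) :
    ∃ s r : ℂ, ∀ j : Fin 4, (![1, -u, -2, 0] : Fin 4 → ℂ) j =
      s * eval (a • pt u t) (pderiv j g₁) + r * eval (a • pt u t) (pderiv j g₂) := by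
  have ht : t^3 + 12*t^2 + 36*t + 36 = 0 := ht
  refine ⟨-(t^2 + 11*t + 24) / 9 / a^2, u * (t^2 + 12*t + 36) / 36 / a, fun j => ?_⟩
  have h3 : ∀ i, pderiv i (3 : MvPolynomial (Fin 4) ℂ) = 0 := fun i => pderiv_C (a := (3 : ℂ))
  fin_cases j <;>
    simp [g₁, g₂, pt, pderiv_X, h3] <;> field_simp
  · grind
  · grind
  · grind
  · grind

/-- The plane `x = u·y + 2z` (with `u³ = -16`) is a tritangent plane to `X₀(54)`:
the linear form `L = x - u·y - 2z`, with coefficient vector `![1, -u, -2, 0]`, meets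
the curve in exactly 3 points, and at each such point the coefficient vector of `L`
lies in the span of the gradients of the defining equations. -/
theorem stmt_10 (u : ℂ) (hu : u^3 + 16 = 0)
    (c : Fin 4 → ℂ) (hc : c = ![1, -u, -2, 0])
    (V : Set (Projectivization ℂ (Fin 4 → ℂ)))
    (hV : V = {P | eval P.rep g₁ = 0 ∧ eval P.rep g₂ = 0 ∧ ∑ j, c j * P.rep j = 0}) :
    V.ncard = 3 ∧
    ∀ P ∈ V, ∃ s t : ℂ, ∀ j : Fin 4,
      c j = s * eval P.rep (pderiv j g₁) + t * eval P.rep (pderiv j g₂) := by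
  subst hc
  -- a point of the section is the class of some `pt u t`
  have hmem : ∀ P, P ∈ V ↔ ∃ t ∈ tangencyRoots, Projectivization.mk ℂ (pt u t) (pt_ne_zero u t) = P := by
    intro P
    have hP : P ∈ V ↔ OnSection u P.rep := by rw [hV]; rfl
    rw [hP, section_iff hu P.rep_nonzero]
    refine exists_congr fun t => and_congr_right fun _ => ?_
    rw [← P.mk_rep, Projectivization.mk_eq_mk_iff', P.mk_rep]
    constructor
    · rintro ⟨a, ha, h⟩
      exact ⟨a⁻¹, by rw [h, inv_smul_smul₀ ha]⟩
    · rintro ⟨a, h⟩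
      have ha : a ≠ 0 := by
        rintro rfl
        exact pt_ne_zero u t (by rw [← h, zero_smul])
      exact ⟨a⁻¹, inv_ne_zero ha, by rw [← h, inv_smul_smul₀ ha]⟩
  refine ⟨?_, fun P hP => ?_⟩
  · have himg : V = (fun t => Projectivization.mk ℂ (pt u t) (pt_ne_zero u t)) '' tangencyRoots := by
      ext P; exact hmem P
    rw [himg, Set.ncard_image_of_injective, ncard_roots]
    intro t t' h
    obtain ⟨a, ha⟩ := (Projectivization.mk_eq_mk_iff' ..).mp h
    have h2 : a = 1 := by simpa [pt] using congrFun ha 2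
    have h0 := congrFun ha 0
    simp [pt, h2] at h0
    exact h0.symm
  · have hS : OnSection u P.rep := by rw [hV] at hP; exact hP
    obtain ⟨t, ht, a, ha, hv⟩ := (section_iff hu P.rep_nonzero).mp hS
    rw [hv]
    exact tangent_at hu ht ha
end

section
/- Let f(u) = 2713u¹⁶ + 9264u¹⁵ + 24252u¹⁴ − 1352u¹³ − 270446u¹² − 739224u¹¹ − 599968u¹⁰ + 1502208u⁹ + 6136803u⁸ + 10670696u⁷ + 11231488u⁶ + 7603968u⁵ + 3052898u⁴ + 591416u³ + 141500u² + 210760u + 154057 ∈ ℚ[u], and let K be the splitting field of f over ℚ. Then K is a Galois extension of ℚ of degree 16, and Gal(K/ℚ) is isomorphic to the direct product D₈ × C₂ of the dihedral group of order 8 with the cyclic group of order 2. -/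
open Polynomial

/-!
Put `q = √2`, `s = √-3` and choose `t`, `v` with `t² = 2q - 1` and `v² = -1 - 2q`, so that
`(tv)² = -7`. The polynomial splits explicitly over `ℚ(t, v, s)`: up to constants it is
the product of an octic over `ℚ(q)` and its conjugate (`fVal_eq_octic`), the octic is the product of
a quartic over `ℚ(t)` and its conjugate (`octic_eq`), and the quartic is the norm from `ℚ(t, v, s)`
of a linear factor `x - rt t v s q` (`quartic_eq`). Hence the roots are `rt (±t) (±v) (±s) q` and
`rt (±v) (±t) (±s) (-q)` (`fVal_root`). Conversely, signed sums of the roots recover `t`, `v` and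
`s` (`mem_of_roots_mem`), so the splitting field is `ℚ(t, v, s)`.

An automorphism is therefore determined by its effect on `t`, `v`, `s`: it permutes the square with
vertices `t, v, -t, -v` and sends `s` to `±s`, which bounds the Galois group by `D₈ × C₂`. All these
symmetries occur: since `2`, `-7`, `-3` are independent modulo squares in `ℚ`, there are
automorphisms changing the sign of exactly one of `q`, `tv`, `s` (`exists_fix_fix_neg`), and from
these one builds `R : t ↦ v ↦ -t`, `S : v ↦ -v` and `C : s ↦ -s`, each fixing the other
generators among `t`, `v`, `s` (`nonempty_gal_mulEquiv`). The degree is then the order of the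
Galois group.
-/

/-! ### Factorization -/

/-- The degree-16 polynomial of the theorem, as a function on a field. -/
def fVal {K : Type*} [Field K] (x : K) : K :=
    2713*x^16 + 9264*x^15 + 24252*x^14 - 1352*x^13 - 270446*x^12 - 739224*x^11 - 599968*x^10 +
    1502208*x^9 + 6136803*x^8 + 10670696*x^7 + 11231488*x^6 + 7603968*x^5 + 3052898*x^4 +
    591416*x^3 + 141500*x^2 + 210760*x + 154057

/-- One root of the polynomial, where `q = √2`, `s = √-3`, `t² = 2q - 1`, `v² = -1 - 2q`. The other
roots come from it by changing the signs of `t`, `v`, `s`, and by `(t, v, q) ↦ (v, t, -q)`. -/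
def rt {K : Type*} [Field K] (t v s q : K) : K :=
  (-2316 + 4023*q + 4127*s - 931*s*q - 1553*t + 3158*t*q + 4*t*s - 513*t*s*q
    + 421*v - 1768*v*q - 906*v*s - 1821*v*s*q - 820*t*v + 2071*t*v*q - 1219*t*v*s - 339*t*v*s*q)
    / 10852

/-- The quartic factor over `ℚ(t)`, scaled by `5426`, with roots `rt t (±v) (±s) q`. -/
def quartic {K : Type*} [Field K] (t q x : K) : K :=
    5426*x^4 - 6316*x^3*t*q + 3106*x^3*t - 8046*x^3*q + 4632*x^3 - 15053*x^2*t*q + 9991*x^2*t +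
    314*x^2*q - 4577*x^2 - 631*x*t*q + 19419*x*t + 22468*x*q - 14195*x + 6219*t*q + 6853*t +
    15808*q + 1183

/-- The octic factor over `ℚ(√2)`, scaled by `2713`, with roots `rt (±t) (±v) (±s) q`. -/
def octic {K : Type*} [Field K] (q x : K) : K :=
    2713*x^8 - 8046*x^7*q + 4632*x^7 - 26652*x^6*q + 32034*x^6 - 72250*x^5*q + 102716*x^5 -
    121998*x^4*q + 190655*x^4 - 124890*x^3*q + 235212*x^3 - 107734*x^2*q + 164646*x^2 -
    61156*x*q + 65060*x - 11610*q + 26221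

/-- The norm from `K(v, s)` to `K` of `y - A₁v - (B₀ + B₁v)s`, where `v² = n` and `s² = -3`. -/
theorem norm_eq {K : Type*} [Field K] {y A₁ B₀ B₁ v s n : K} (hv : v^2 = n) (hs : s^2 = -3) :
    (y - A₁*v - (B₀ + B₁*v)*s) * (y - A₁*v + (B₀ + B₁*v)*s) * (y + A₁*v - (B₀ - B₁*v)*s)
        * (y + A₁*v + (B₀ - B₁*v)*s)
      = (y^2 + n*A₁^2 + 3*B₀^2 + 3*n*B₁^2)^2 - n*(-2*y*A₁ + 6*B₀*B₁)^2 := by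
  have h₁ : (y - A₁*v - (B₀ + B₁*v)*s) * (y - A₁*v + (B₀ + B₁*v)*s)
      = (y^2 + n*A₁^2 + 3*B₀^2 + 3*n*B₁^2) + v*(-2*y*A₁ + 6*B₀*B₁) := by
    linear_combination (-(B₀ + B₁*v)^2) * hs + (A₁^2 + 3*B₁^2) * hv
  have h₂ : (y + A₁*v - (B₀ - B₁*v)*s) * (y + A₁*v + (B₀ - B₁*v)*s)
      = (y^2 + n*A₁^2 + 3*B₀^2 + 3*n*B₁^2) - v*(-2*y*A₁ + 6*B₀*B₁) := by
    linear_combination (-(B₀ - B₁*v)^2) * hs + (A₁^2 + 3*B₁^2) * hv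
  rw [mul_assoc _ (y + A₁*v - (B₀ - B₁*v)*s), h₁, h₂]
  linear_combination (-(-2*y*A₁ + 6*B₀*B₁)^2) * hv

theorem quartic_eq {K : Type*} [Field K] [CharZero K] {t v s q : K} (ht : t^2 = 2*q - 1)
    (hv : v^2 = -1 - 2*q) (hs : s^2 = -3) (hq : q^2 = 2) (x : K) :
    5426 * ((x - rt t v s q) * (x - rt t v (-s) q) * (x - rt t (-v) s q) * (x - rt t (-v) (-s) q))
      = quartic t q x := by
  -- `rt t v s q = (A₀ + A₁v + (B₀ + B₁v)s) / 10852` with `A₀, A₁, B₀, B₁` in `ℚ(t)`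
  obtain ⟨A₁, hA₁⟩ : ∃ a : K, a = (2071*t*q - 820*t - 1768*q + 421) := ⟨_, rfl⟩
  obtain ⟨B₀, hB₀⟩ : ∃ a : K, a = (-513*t*q + 4*t - 931*q + 4127) := ⟨_, rfl⟩
  obtain ⟨B₁, hB₁⟩ : ∃ a : K, a = (-339*t*q - 1219*t - 1821*q - 906) := ⟨_, rfl⟩
  obtain ⟨y, hy⟩ : ∃ a : K, a = 10852 * x - (3158*t*q - 1553*t + 4023*q - 2316) := ⟨_, rfl⟩
  have h := norm_eq (y := y) (A₁ := A₁) (B₀ := B₀) (B₁ := B₁) hv hs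
  have e₁ : y - A₁*v - (B₀ + B₁*v)*s = 10852 * (x - rt t v s q) := by
    rw [hy, hA₁, hB₀, hB₁, rt]; ring
  have e₂ : y - A₁*v + (B₀ + B₁*v)*s = 10852 * (x - rt t v (-s) q) := by
    rw [hy, hA₁, hB₀, hB₁, rt]; ring
  have e₃ : y + A₁*v - (B₀ - B₁*v)*s = 10852 * (x - rt t (-v) s q) := by
    rw [hy, hA₁, hB₀, hB₁, rt]; ring
  have e₄ : y + A₁*v + (B₀ - B₁*v)*s = 10852 * (x - rt t (-v) (-s) q) := by
    rw [hy, hA₁, hB₀, hB₁, rt]; ring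
  rw [e₁, e₂, e₃, e₄] at h
  have hk : (2555991180416 : K) ≠ 0 := by norm_num
  refine mul_left_cancel₀ hk (Eq.trans (by ring) (h.trans ?_))
  rw [hy, hA₁, hB₀, hB₁, quartic]
  linear_combination (
    1858005857189248*x^2*q^3 + 5393891559486240*x^2*q^2 - 10100877683057664*x^2*q +
    812582853345536*x^2 - 1268989324933696*x*t*q^4 - 565955141870656*x*t*q^3 +
    3361181514669744*x*t*q^2 - 1246439509635776*x*t*q - 93641087501984*x*t +
    457551156175040*x*q^4 - 422570796412208*x*q^3 + 18818577158749728*x*q^2 -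
    5941014991180064*x*q - 1214394936093760*x + 85888558041664*t^2*q^6 + 251378329159288*t^2*q^5
    + 173618658326021*t^2*q^4 - 211022839123136*t^2*q^3 + 377777504374148*t^2*q^2 +
    77256081746656*t^2*q + 13728471934372*t^2 - 134163157409344*t*q^6 + 992459849423032*t*q^5 +
    494844084994720*t*q^4 - 2525092763534664*t*q^3 + 2998812942797096*t*q^2 +
    459240272536112*t*q - 146934280868624*t + 171777116083328*q^7 + 953917718776672*q^6 -
    117565657800986*q^5 - 1503051142118123*q^4 - 2009324268249032*q^3 + 8220915167987468*q^2 -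
    93074692386696*q + 340890985689172) * ht + (
    -5194404361723520*x^2*t*q + 11077027955786880*x^2*t + 3716011714378496*x^2*q^2 +
    5716040425410048*x^2*q - 13086418114059200*x^2 - 2537978649867392*x*t*q^3 +
    5180878241053696*x*t*q^2 + 8705754951112960*x*t*q + 23069023970793280*x*t +
    915102312350080*x*q^3 + 2641392187615104*x*q^2 + 34670964708779584*x*q - 21676520823617152*x
    - 268326314818688*t*q^5 + 1740551090707616*t*q^4 - 507443623531872*t*q^3 -
    426547633224384*t*q^2 + 9940990683705792*t*q + 7935789694170560*t + 343554232166656*q^6 +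
    1736058321470016*q^5 + 181771790589904*q^4 + 1197429579963520*q^3 + 1345145002073376*q^2 +
    21507149429420736*q - 63309065735936) * hq


theorem octic_eq {K : Type*} [Field K] {t q : K} (ht : t^2 = 2*q - 1) (hq : q^2 = 2) (x : K) :
    quartic t q x * quartic (-t) q x = 10852 * octic q x := by
  unfold quartic octic
  linear_combination (-(
    -6316*x^3*q + 3106*x^3 - 15053*x^2*q + 9991*x^2 - 631*x*q + 19419*x + 6219*q + 6853)^2) * ht + (
    -79783712*x^6*q + 183099956*x^6 - 380298992*x^5*q + 624527704*x^5 - 469127202*x^4*q +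
    973126393*x^4 + 119123044*x^3*q + 990509494*x^3 + 373662106*x^2*q + 541017671*x^2 +
    15696756*x*q + 236729838*x - 77351922*q + 118093597) * hq

theorem fVal_eq_octic {K : Type*} [Field K] {q : K} (hq : q^2 = 2) (x : K) :
    octic q x * octic (-q) x = 2713 * fVal x := by
  unfold octic fVal
  linear_combination (-(
    -8046*x^7 - 26652*x^6 - 72250*x^5 - 121998*x^4 - 124890*x^3 - 107734*x^2 - 61156*x - 11610)^2) * hq

/-! ### Roots -/

theorem fVal_rt {K : Type*} [Field K] [CharZero K] {t v s q : K} (ht : t^2 = 2*q - 1)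
    (hv : v^2 = -1 - 2*q) (hs : s^2 = -3) (hq : q^2 = 2) : fVal (rt t v s q) = 0 := by
  have h₁ := quartic_eq ht hv hs hq (rt t v s q)
  have h₂ := octic_eq ht hq (rt t v s q)
  have h₃ := fVal_eq_octic hq (rt t v s q)
  rw [← h₁] at h₂
  simp only [sub_self, zero_mul, mul_zero] at h₂
  have h₄ : octic q (rt t v s q) = 0 := by
    have : (10852 : K) ≠ 0 := by norm_num
    simpa [this] using h₂.symm
  rw [h₄, zero_mul] at h₃
  have : (2713 : K) ≠ 0 := by norm_num
  simpa [this] using h₃.symm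

theorem octic_root {K : Type*} [Field K] [CharZero K] {t v s q : K} (ht : t^2 = 2*q - 1)
    (hv : v^2 = -1 - 2*q) (hs : s^2 = -3) (hq : q^2 = 2) {x : K} (hx : octic q x = 0) :
    ∃ a b c : ℤˣ, x = rt (a*t) (b*v) (c*s) q := by
  have h := octic_eq ht hq x
  rw [hx, mul_zero, ← quartic_eq ht hv hs hq,
    ← quartic_eq (t := -t) (by linear_combination ht) hv hs hq] at h
  have : (5426 : K) ≠ 0 := by norm_num
  simp only [mul_eq_zero, this, false_or, sub_eq_zero] at h
  rcases h with (((h | h) | h) | h) | (((h | h) | h) | h)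
  · exact ⟨1, 1, 1, by simpa using h⟩
  · exact ⟨1, 1, -1, by simpa using h⟩
  · exact ⟨1, -1, 1, by simpa using h⟩
  · exact ⟨1, -1, -1, by simpa using h⟩
  · exact ⟨-1, 1, 1, by simpa using h⟩
  · exact ⟨-1, 1, -1, by simpa using h⟩
  · exact ⟨-1, -1, 1, by simpa using h⟩
  · exact ⟨-1, -1, -1, by simpa using h⟩

theorem fVal_root {K : Type*} [Field K] [CharZero K] {t v s q : K} (ht : t^2 = 2*q - 1)
    (hv : v^2 = -1 - 2*q) (hs : s^2 = -3) (hq : q^2 = 2) {x : K} (hx : fVal x = 0) :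
    ∃ a b c : ℤˣ, x = rt (a*t) (b*v) (c*s) q ∨ x = rt (a*v) (b*t) (c*s) (-q) := by
  have h := fVal_eq_octic hq x
  rw [hx, mul_zero, mul_eq_zero] at h
  rcases h with h | h
  · obtain ⟨a, b, c, h⟩ := octic_root ht hv hs hq h
    exact ⟨a, b, c, .inl h⟩
  · obtain ⟨a, b, c, h⟩ := octic_root (t := v) (v := t) (q := -q)
      (by linear_combination hv) (by linear_combination ht) hs (by linear_combination hq) h
    exact ⟨a, b, c, .inr h⟩

/-- A subfield containing all the roots of the polynomial contains `t`, `v` and `s`: the sum of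
the eight roots of the octic factor gives `q`, and signed sums of them give `t`, `v`, `s` times
nonzero elements of `ℚ(q)`. -/
theorem mem_of_roots_mem {K : Type*} [Field K] [Algebra ℚ K] (F : IntermediateField ℚ K)
    {t v s q : K} (ht : t^2 = 2*q - 1) (hv : v^2 = -1 - 2*q) (hs : s^2 = -3) (hq : q^2 = 2)
    (hF : ∀ x : K, fVal x = 0 → x ∈ F) : t ∈ F ∧ v ∈ F ∧ s ∈ F := by
  have : CharZero K := algebraRat.charZero K
  have hm : ∀ a b c : ℤˣ, rt (a*t) (b*v) (c*s) q ∈ F := by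
    intro a b c
    have hu : ∀ e : ℤˣ, ((e : ℤ) : K)^2 = 1 := by
      intro e; rcases Int.units_eq_one_or e with rfl | rfl <;> norm_num
    exact hF _ (fVal_rt (by rw [mul_pow, hu, one_mul, ht]) (by rw [mul_pow, hu, one_mul, hv])
      (by rw [mul_pow, hu, one_mul, hs]) hq)
  have hn : ∀ n : ℚ, (n : K) ∈ F := fun n => by simp
  have key : ∀ {y z : K} (c : K), c ∈ F → c ≠ 0 → y ∈ F → y = c * z → z ∈ F := by
    intro y z c hc hc0 hy h
    rw [show z = y / c by rw [h]; field_simp]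
    exact F.div_mem hy hc
  have h₁ := hm 1 1 1
  have h₂ := hm 1 1 (-1)
  have h₃ := hm 1 (-1) 1
  have h₄ := hm 1 (-1) (-1)
  have h₅ := hm (-1) 1 1
  have h₆ := hm (-1) 1 (-1)
  have h₇ := hm (-1) (-1) 1
  have h₈ := hm (-1) (-1) (-1)
  have hqF : q ∈ F := by
    refine key (((8 * 4023 / 10852 : ℚ)) : K) (hn _) (by norm_num)
      (F.add_mem (F.add_mem (F.add_mem (F.add_mem (F.add_mem (F.add_mem (F.add_mem
        (F.add_mem h₁ h₂) h₃) h₄) h₅) h₆) h₇) h₈) (hn (8 * 2316 / 10852))) ?_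
    simp only [rt]; push_cast; ring
  have hlin : ∀ a b : ℚ, (a : K) + b * q ∈ F := fun a b =>
    F.add_mem (hn a) (F.mul_mem (hn b) hqF)
  -- the conjugate `a - bq` gives the norm `a² - 2b²`
  have hlin0 : ∀ a b : ℚ, a^2 - 2*b^2 ≠ 0 → (a : K) + b * q ≠ 0 := by
    intro a b h h0
    apply h
    have : ((a^2 - 2*b^2 : ℚ) : K) = 0 := by
      push_cast
      linear_combination ((a : K) - b * q) * h0 + (b : K)^2 * hq
    exact_mod_cast this
  refine ⟨?_, ?_, ?_⟩
  · refine key (((8 * -1553 / 10852 : ℚ) : K) + ((8 * 3158 / 10852 : ℚ) : K) * q) (hlin _ _)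
      (hlin0 _ _ (by norm_num)) (F.sub_mem (F.add_mem (F.add_mem (F.add_mem h₁ h₂) h₃) h₄)
        (F.add_mem (F.add_mem (F.add_mem h₅ h₆) h₇) h₈)) ?_
    simp only [rt]; push_cast; ring
  · refine key (((8 * 421 / 10852 : ℚ) : K) + ((8 * -1768 / 10852 : ℚ) : K) * q) (hlin _ _)
      (hlin0 _ _ (by norm_num)) (F.sub_mem (F.add_mem (F.add_mem (F.add_mem h₁ h₂) h₅) h₆)
        (F.add_mem (F.add_mem (F.add_mem h₃ h₄) h₇) h₈)) ?_
    simp only [rt]; push_cast; ring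
  · refine key (((8 * 4127 / 10852 : ℚ) : K) + ((8 * -931 / 10852 : ℚ) : K) * q) (hlin _ _)
      (hlin0 _ _ (by norm_num)) (F.sub_mem (F.add_mem (F.add_mem (F.add_mem h₁ h₃) h₅) h₇)
        (F.add_mem (F.add_mem (F.add_mem h₂ h₄) h₆) h₈)) ?_
    simp only [rt]; push_cast; ring

/-! ### Sign-change automorphisms -/

/-- If `y² = d` with `d ∈ ℚ` not a square, then some automorphism sends `y` to `-y`. -/
theorem exists_neg {K : Type*} [Field K] [Algebra ℚ K] [FiniteDimensional ℚ K] [IsGalois ℚ K]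
    {y : K} {d : ℚ} (hy : y^2 = (d : K)) (hd : ¬ IsSquare d) : ∃ σ : K ≃ₐ[ℚ] K, σ y = -y := by
  by_contra! h
  have hfix : ∀ σ : K ≃ₐ[ℚ] K, σ y = y := by
    intro σ
    have h₁ : (σ y)^2 = y^2 := by rw [← map_pow, hy, map_ratCast]
    exact (sq_eq_sq_iff_eq_or_eq_neg.mp h₁).resolve_right (h σ)
  obtain ⟨r, rfl⟩ := (IsGalois.mem_range_algebraMap_iff_fixed y).mpr hfix
  have : CharZero K := algebraRat.charZero K
  refine hd ⟨r, ?_⟩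
  have h₂ : ((r^2 : ℚ) : K) = (d : K) := by simpa using hy
  rw [← sq]
  exact (Rat.cast_injective h₂).symm

/-- On a subgroup `H` whose elements send `x` to `±x`, if each of `y` and `xy` is
negated by some element, then `y` is negated by an element fixing `x`. -/
theorem exists_fix_neg {K : Type*} [Field K] [Algebra ℚ K] (H : Subgroup (K ≃ₐ[ℚ] K)) {x y : K}
    (hx : ∀ σ ∈ H, σ x = x ∨ σ x = -x)
    (hx0 : x ≠ 0) (hy1 : ∃ σ ∈ H, σ y = -y) (hxy : ∃ σ ∈ H, σ (x * y) = -(x * y)) :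
    ∃ σ ∈ H, σ x = x ∧ σ y = -y := by
  obtain ⟨σ, hσ, hσy⟩ := hy1
  rcases hx σ hσ with hσx | hσx
  · exact ⟨σ, hσ, hσx, hσy⟩
  obtain ⟨τ, hτ, h⟩ := hxy
  rw [map_mul] at h
  rcases hx τ hτ with hτx | hτx
  · rw [hτx, ← mul_neg] at h
    exact ⟨τ, hτ, hτx, mul_left_cancel₀ hx0 h⟩
  · rw [hτx, neg_mul, neg_inj] at h
    have hτy := mul_left_cancel₀ hx0 h
    exact ⟨σ * τ, H.mul_mem hσ hτ, by simp [hτx, hσx], by simp [hτy, hσy]⟩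

/-- If `x² = a`, `y² = b`, `z² = c` and none of `c`, `ac`, `bc`, `abc` is a rational square, then
some automorphism fixes `x` and `y` and sends `z` to `-z`. -/
theorem exists_fix_fix_neg {K : Type*} [Field K] [Algebra ℚ K] [FiniteDimensional ℚ K]
    [IsGalois ℚ K] {x y z : K} {a b c : ℚ} (hx : x^2 = (a : K)) (hy : y^2 = (b : K))
    (hz : z^2 = (c : K)) (ha : a ≠ 0) (hb : b ≠ 0) (h₁ : ¬ IsSquare c) (h₂ : ¬ IsSquare (a * c))
    (h₃ : ¬ IsSquare (b * c)) (h₄ : ¬ IsSquare (a * b * c)) :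
    ∃ σ : K ≃ₐ[ℚ] K, σ x = x ∧ σ y = y ∧ σ z = -z := by
  have : CharZero K := algebraRat.charZero K
  have hpm : ∀ {u : K} {d : ℚ}, u^2 = (d : K) → ∀ σ : K ≃ₐ[ℚ] K, σ u = u ∨ σ u = -u := by
    intro u d hu σ
    exact sq_eq_sq_iff_eq_or_eq_neg.mp (by rw [← map_pow, hu, map_ratCast])
  have hne : ∀ {u : K} {d : ℚ}, u^2 = (d : K) → d ≠ 0 → u ≠ 0 := by
    rintro u d hu hd rfl
    exact hd (by simpa using hu.symm)
  have hyz : (y * z)^2 = ((b * c : ℚ) : K) := by rw [mul_pow, hy, hz]; push_cast; rfl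
  -- the stabilizer of `x`
  let H : Subgroup (K ≃ₐ[ℚ] K) := MulAction.stabilizer _ x
  have hH : ∀ σ : K ≃ₐ[ℚ] K, σ ∈ H ↔ σ x = x := fun σ => MulAction.mem_stabilizer_iff
  have step : ∀ {u : K} {d : ℚ}, u^2 = (d : K) → ¬ IsSquare d → ¬ IsSquare (a * d) →
      ∃ σ ∈ H, σ u = -u := by
    intro u d hu hd had
    have hxu : (x * u)^2 = ((a * d : ℚ) : K) := by rw [mul_pow, hx, hu]; push_cast; rfl
    obtain ⟨σ, -, hσ⟩ := exists_fix_neg ⊤ (fun σ _ => hpm hx σ) (hne hx ha)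
      ((exists_neg hu hd).imp fun _ h => ⟨trivial, h⟩)
      ((exists_neg hxu had).imp fun _ h => ⟨trivial, h⟩)
    exact ⟨σ, (hH σ).mpr hσ.1, hσ.2⟩
  obtain ⟨σ, hσ, h⟩ := exists_fix_neg H (fun σ _ => hpm hy σ) (hne hy hb)
    (step hz h₁ h₂) (step hyz h₃ (by rwa [← mul_assoc]))
  exact ⟨σ, (hH σ).mp hσ, h⟩

/-! ### Homomorphisms from the product of `D₈` and `C₂` -/

open DihedralGroup in
/-- The homomorphism `D₈ × C₂ → G` given by `r ↦ R`, `s ↦ S` and the generator of `C₂` going to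
`C`, for elements of `G` satisfying the standard relations. Since `sr i` stands for `s * r ^ i`, it
goes to `S * R ^ i`. -/
def dihedralProdHom {G : Type*} [Group G] (R S C : G) (hR : R^4 = 1) (hS : S^2 = 1) (hC : C^2 = 1)
    (hRS : R * S * R = S) (hCR : Commute C R) (hCS : Commute C S) :
    DihedralGroup 4 × Multiplicative (ZMod 2) →* G :=
  have hadd : ∀ i j : ZMod 4, R^(i + j).val = R^i.val * R^j.val := fun i j => by
    rw [ZMod.val_add, ← pow_add, ← pow_eq_pow_mod _ hR]
  have hSR : ∀ n : ℕ, R^n * S * R^n = S := fun n => by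
    induction n with
    | zero => simp
    | succ n ih =>
      calc R^(n + 1) * S * R^(n + 1) = R^n * (R * S * R) * R^n := by
            nth_rewrite 2 [pow_succ']
            rw [pow_succ]
            simp only [mul_assoc]
        _ = S := by rw [hRS, ih]
  have hsub : ∀ i j : ZMod 4, R^i.val * S * R^j.val = S * R^(j - i).val := fun i j => by
    rw [show j = i + (j - i) by ring, hadd, ← mul_assoc, hSR]; simp
  have hSS : S * S = 1 := by rw [← sq, hS]
  have hsub' : ∀ i j : ZMod 4, S * R^i.val * (S * R^j.val) = R^(j - i).val := fun i j => by
    rw [mul_assoc, ← mul_assoc (R^i.val), hsub, ← mul_assoc, hSS, one_mul]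
  let D : DihedralGroup 4 →* G := MonoidHom.mk'
    (fun d => match d with
      | r i => R^i.val
      | sr i => S * R^i.val) (by
      rintro (i | i) (j | j)
      · simpa using hadd i j
      · simp only [r_mul_sr]; rw [← hsub, mul_assoc]
      · simp only [sr_mul_r]; rw [hadd, mul_assoc]
      · simp only [sr_mul_sr]; rw [hsub'])
  let E : Multiplicative (ZMod 2) →* G := MonoidHom.mk' (fun c => C^c.toAdd.val) (by
      intro i j
      rw [toAdd_mul, ZMod.val_add, ← pow_add, ← pow_eq_pow_mod _ hC])
  MonoidHom.noncommCoprod D E (by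
    rintro (i | i) j
    · exact ((hCR.pow_pow _ _).symm)
    · exact ((hCS.pow_left _).mul_right (hCR.pow_pow _ _)).symm)

theorem zmod_four_cases : ∀ i : ZMod 4, i = 0 ∨ i = 1 ∨ i = 2 ∨ i = 3 := by decide

theorem zmod_two_cases : ∀ c : Multiplicative (ZMod 2),
    c = Multiplicative.ofAdd 0 ∨ c = Multiplicative.ofAdd 1 := by decide

open DihedralGroup in
theorem dihedralProdHom_apply_r {G : Type*} [Group G] (R S C : G) (hR : R^4 = 1) (hS : S^2 = 1)
    (hC : C^2 = 1) (hRS : R * S * R = S) (hCR : Commute C R) (hCS : Commute C S) (i : ZMod 4)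
    (c : Multiplicative (ZMod 2)) :
    dihedralProdHom R S C hR hS hC hRS hCR hCS (r i, c) = R^i.val * C^c.toAdd.val := rfl

open DihedralGroup in
theorem dihedralProdHom_apply_sr {G : Type*} [Group G] (R S C : G) (hR : R^4 = 1) (hS : S^2 = 1)
    (hC : C^2 = 1) (hRS : R * S * R = S) (hCR : Commute C R) (hCS : Commute C S) (i : ZMod 4)
    (c : Multiplicative (ZMod 2)) :
    dihedralProdHom R S C hR hS hC hRS hCR hCS (sr i, c) = S * R^i.val * C^c.toAdd.val := rfl

/-! ### The Galois group of `ℚ(t, v, s)` -/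

open DihedralGroup in
/-- The Galois group of a field `K` generated by `t`, `v`, `s` with `t² = 2q - 1`, `v² = -1 - 2q`,
`s² = -3`, `q² = 2`; generation is used only through `hext`, which says that an automorphism is
determined by the images of `t`, `v`, `s`. The group `D₈` permutes the square with vertices
`t, v, -t, -v`, and `C₂` changes the sign of `s`. -/
theorem nonempty_gal_mulEquiv {K : Type*} [Field K] [Algebra ℚ K] [FiniteDimensional ℚ K]
    [IsGalois ℚ K] {t v s q : K} (ht : t^2 = 2*q - 1) (hv : v^2 = -1 - 2*q) (hs : s^2 = -3)
    (hq : q^2 = 2)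
    (hext : ∀ σ τ : K ≃ₐ[ℚ] K, σ t = τ t → σ v = τ v → σ s = τ s → σ = τ) :
    Nonempty ((K ≃ₐ[ℚ] K) ≃* DihedralGroup 4 × Multiplicative (ZMod 2)) := by
  have : CharZero K := algebraRat.charZero K
  have hw : (t * v)^2 = ((-7 : ℚ) : K) := by
    rw [mul_pow, ht, hv]; push_cast; linear_combination (-4) * hq
  have hq' : q^2 = ((2 : ℚ) : K) := by rw [hq]; norm_num
  have hs' : s^2 = ((-3 : ℚ) : K) := by rw [hs]; norm_num
  have hne : ∀ {u : K} {d : ℚ}, u^2 = (d : K) → d ≠ 0 → u ≠ 0 := by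
    rintro u d hu hd rfl
    exact hd (by simpa using hu.symm)
  have hs0 : s ≠ 0 := hne hs' (by norm_num)
  have hq0 : q ≠ 0 := hne hq' (by norm_num)
  have ht0 : t ≠ 0 := left_ne_zero_of_mul (hne hw (by norm_num))
  have hv0 : v ≠ 0 := right_ne_zero_of_mul (hne hw (by norm_num))
  have htv : t^2 ≠ v^2 := by
    intro h
    have h₄ : (4 : K) * q = 0 := by linear_combination h - ht + hv
    exact hq0 (by simpa using h₄)
  have htv₁ : t ≠ v := fun h => htv (by rw [h])
  have htv₂ : t ≠ -v := fun h => htv (by rw [h, neg_sq])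
  -- sign changes of one of `q`, `w = tv`, `s`, the other two being fixed
  obtain ⟨C₀, hC₁, hC₂, hC₃⟩ := exists_fix_fix_neg hq' hw hs' (by norm_num) (by norm_num)
    (by norm_num) (by norm_num) (by norm_num) (by norm_num)
  obtain ⟨S₀, hS₁, hS₂, hS₃⟩ := exists_fix_fix_neg hq' hs' hw (by norm_num) (by norm_num)
    (by norm_num) (by norm_num) (by norm_num) (by norm_num)
  obtain ⟨Q₀, hQ₁, hQ₂, hQ₃⟩ := exists_fix_fix_neg hw hs' hq' (by norm_num) (by norm_num)
    (by norm_num) (by norm_num) (by norm_num) (by norm_num)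
  -- if `q` is fixed then `t` goes to `±t`; if `q` goes to `-q` then `t` goes to `±v`
  have hfix : ∀ σ : K ≃ₐ[ℚ] K, σ q = q → σ t = t ∨ σ t = -t := fun σ h =>
    sq_eq_sq_iff_eq_or_eq_neg.mp (by rw [← map_pow, ht]; simp [h, map_ofNat])
  have hswap : ∀ σ : K ≃ₐ[ℚ] K, σ q = -q → σ t = v ∨ σ t = -v := fun σ h =>
    sq_eq_sq_iff_eq_or_eq_neg.mp (by rw [← map_pow, ht, hv]; simp [h, map_ofNat]; ring)
  have hdet : ∀ {σ : K ≃ₐ[ℚ] K} {a z : K}, σ (t * v) = z → σ t = a → a ≠ 0 → σ v = z / a := by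
    intro σ a z h ha ha0
    rw [map_mul, ha] at h
    rw [← h]; field_simp
  -- `R` has order 4 on the square
  obtain ⟨R, hRt, hRv, hRs⟩ : ∃ R : K ≃ₐ[ℚ] K, R t = v ∧ R v = -t ∧ R s = s := by
    have h₁ : (Q₀ * S₀) q = -q := by simp [hS₁, hQ₃]
    have h₂ : (Q₀ * S₀) (t * v) = -(t * v) := by
      rw [AlgEquiv.mul_apply, hS₃, map_neg, hQ₁]
    have h₃ : (Q₀ * S₀) s = s := by simp [hS₂, hQ₂]
    rcases hswap _ h₁ with h | h
    · refine ⟨_, h, ?_, h₃⟩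
      rw [hdet h₂ h hv0]; field_simp
    · have h₄ : (Q₀ * S₀) v = t := by
        rw [hdet h₂ h (neg_ne_zero.mpr hv0)]; field_simp
      generalize Q₀ * S₀ = P at *
      exact ⟨P * P * P, by simp [h, h₄], by simp [h, h₄], by simp [h₃]⟩
  obtain ⟨S, hSt, hSv, hSs⟩ : ∃ S : K ≃ₐ[ℚ] K, S t = t ∧ S v = -v ∧ S s = s := by
    rcases hfix _ hS₁ with h | h
    · refine ⟨_, h, ?_, hS₂⟩
      rw [hdet hS₃ h ht0]; field_simp
    · have h₄ : S₀ v = v := by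
        rw [hdet hS₃ h (neg_ne_zero.mpr ht0)]; field_simp
      exact ⟨R * R * S₀, by simp [h, hRt, hRv], by simp [h₄, hRt, hRv], by simp [hS₂, hRs]⟩
  obtain ⟨C, hCt, hCv, hCs⟩ : ∃ C : K ≃ₐ[ℚ] K, C t = t ∧ C v = v ∧ C s = -s := by
    rcases hfix _ hC₁ with h | h
    · refine ⟨_, h, ?_, hC₃⟩
      rw [hdet hC₂ h ht0]; field_simp
    · have h₄ : C₀ v = -v := by
        rw [hdet hC₂ h (neg_ne_zero.mpr ht0)]; field_simp
      exact ⟨R * R * C₀, by simp [h, hRt, hRv], by simp [h₄, hRt, hRv], by simp [hC₃, hRs]⟩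
  have hR : R^4 = 1 := hext _ _ (by simp [pow_succ, hRt, hRv]) (by simp [pow_succ, hRt, hRv])
    (by simp [pow_succ, hRs])
  have hS : S^2 = 1 := hext _ _ (by simp [pow_succ, hSt]) (by simp [pow_succ, hSv])
    (by simp [pow_succ, hSs])
  have hC : C^2 = 1 := hext _ _ (by simp [pow_succ, hCt]) (by simp [pow_succ, hCv])
    (by simp [pow_succ, hCs])
  have hRS : R * S * R = S := hext _ _ (by simp [hRt, hRv, hSt, hSv])
    (by simp [hRt, hRv, hSt, hSv]) (by simp [hRs, hSs])
  have hCR : Commute C R := hext _ _ (by simp [hRt, hCt, hCv]) (by simp [hRv, hCt, hCv])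
    (by simp [hRs, hCs])
  have hCS : Commute C S := hext _ _ (by simp [hSt, hCt]) (by simp [hSv, hCv])
    (by simp [hSs, hCs])
  have e₁ : (1 : ZMod 4).val = 1 := rfl
  have e₂ : (2 : ZMod 4).val = 2 := rfl
  have e₃ : (3 : ZMod 4).val = 3 := rfl
  have e₄ : (1 : ZMod 2).val = 1 := rfl
  refine ⟨(MulEquiv.ofBijective (dihedralProdHom R S C hR hS hC hRS hCR hCS) ⟨?_, ?_⟩).symm⟩
  · rw [injective_iff_map_eq_one]
    have hnt : -t ≠ t := fun h => ht0 (self_eq_neg.mp h.symm)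
    have hnv : -v ≠ v := fun h => hv0 (self_eq_neg.mp h.symm)
    have hns : -s ≠ s := fun h => hs0 (self_eq_neg.mp h.symm)
    have htv₃ : -v ≠ t := htv₂.symm
    rintro ⟨i | i, c⟩ h
    · rw [dihedralProdHom_apply_r] at h
      have h₁ := DFunLike.congr_fun h t
      have h₂ := DFunLike.congr_fun h s
      rcases zmod_four_cases i with rfl | rfl | rfl | rfl <;> rcases zmod_two_cases c with rfl | rfl
      · rfl
      all_goals
        exfalso
        simp [e₁, e₂, e₃, e₄, pow_succ, hRt, hRv, hCt, hCs, hnt, hns, htv₁.symm, htv₃]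
          at h₁ h₂
    · exfalso
      rw [dihedralProdHom_apply_sr] at h
      have h₁ := DFunLike.congr_fun h t
      have h₂ := DFunLike.congr_fun h v
      rcases zmod_four_cases i with rfl | rfl | rfl | rfl <;>
        rcases zmod_two_cases c with rfl | rfl <;>
        simp [e₁, e₂, e₃, e₄, pow_succ, hRt, hRv, hCt, hCv, hSt, hSv, hnt, hnv, htv₁.symm, htv₃]
          at h₁ h₂
  · intro σ
    have hσs : σ s = s ∨ σ s = -s :=
      sq_eq_sq_iff_eq_or_eq_neg.mp (by rw [← map_pow, hs', map_ratCast])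
    have hσq : σ q = q ∨ σ q = -q :=
      sq_eq_sq_iff_eq_or_eq_neg.mp (by rw [← map_pow, hq', map_ratCast])
    have hσw : σ (t * v) = t * v ∨ σ (t * v) = -(t * v) :=
      sq_eq_sq_iff_eq_or_eq_neg.mp (by rw [← map_pow, hw, map_ratCast])
    -- the element of `C₂` is read off from `σ s`, the symmetry of the square from `σ t` and `σ v`
    obtain ⟨c, hct, hcv, hcs, hcR, hcS⟩ : ∃ c : Multiplicative (ZMod 2),
        (C^c.toAdd.val) t = t ∧ (C^c.toAdd.val) v = v ∧ (C^c.toAdd.val) s = σ s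
        ∧ R (σ s) = σ s ∧ S (σ s) = σ s := by
      rcases hσs with h | h
      · exact ⟨Multiplicative.ofAdd 0, by simp [h, hRs, hSs]⟩
      · exact ⟨Multiplicative.ofAdd 1, by simp [e₄, h, hCt, hCv, hCs, hRs, hSs]⟩
    obtain ⟨d, hdt, hdv⟩ : ∃ d : DihedralGroup 4,
        (dihedralProdHom R S C hR hS hC hRS hCR hCS (d, c)) t = σ t ∧
        (dihedralProdHom R S C hR hS hC hRS hCR hCS (d, c)) v = σ v := by
      have hσt : (σ t = t ∨ σ t = -t) ∨ (σ t = v ∨ σ t = -v) := hσq.imp (hfix σ) (hswap σ)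
      have hσv : ∀ a b : K, σ t = a → a ≠ 0 → t * v = a * b → σ v = b ∨ σ v = -b := by
        intro a b ha ha0 hab
        refine hσw.imp (fun h => ?_) (fun h => ?_)
        · rw [hdet h ha ha0, hab]; field_simp
        · rw [hdet h ha ha0, hab]; field_simp
      rcases hσt with (h | h) | (h | h)
      · rcases hσv t v h ht0 rfl with h' | h'
        · exact ⟨r 0, by rw [dihedralProdHom_apply_r]; simp [hct, hcv, h, h']⟩
        · exact ⟨sr 0, by simp [dihedralProdHom_apply_sr, hct, hcv, h, h', hSt, hSv]⟩
      · rcases hσv (-t) (-v) h (neg_ne_zero.mpr ht0) (by ring) with h' | h'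
        · exact ⟨r 2, by
            simp [dihedralProdHom_apply_r, e₂, pow_succ, hct, hcv, h, h', hRt, hRv]⟩
        · exact ⟨sr 2, by
            simp [dihedralProdHom_apply_sr, e₂, pow_succ, hct, hcv, h, h', hRt, hRv,
              hSt, hSv]⟩
      · rcases hσv v t h hv0 (by ring) with h' | h'
        · exact ⟨sr 3, by
            simp [dihedralProdHom_apply_sr, e₃, pow_succ, hct, hcv, h, h', hRt, hRv,
              hSt, hSv]⟩
        · exact ⟨r 1, by
            simp [dihedralProdHom_apply_r, e₁, pow_succ, hct, hcv, h, h', hRt, hRv]⟩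
      · rcases hσv (-v) (-t) h (neg_ne_zero.mpr hv0) (by ring) with h' | h'
        · exact ⟨sr 1, by
            simp [dihedralProdHom_apply_sr, e₁, pow_succ, hct, hcv, h, h', hRt, hRv,
              hSt, hSv]⟩
        · exact ⟨r 3, by
            simp [dihedralProdHom_apply_r, e₃, pow_succ, hct, hcv, h, h', hRt, hRv]⟩
    refine ⟨(d, c), hext _ _ hdt hdv ?_⟩
    have hRn : ∀ n : ℕ, (R^n) (σ s) = σ s := fun n => by
      induction n with
      | zero => rfl
      | succ n ih => rw [pow_succ, AlgEquiv.mul_apply, hcR, ih]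
    rcases d with i | i
    · rw [dihedralProdHom_apply_r, AlgEquiv.mul_apply, hcs, hRn]
    · rw [dihedralProdHom_apply_sr, AlgEquiv.mul_apply, hcs, AlgEquiv.mul_apply, hRn, hcS]

/-! ### The splitting field -/

/-- The theorem for an arbitrary splitting field `L` and an arbitrary `ℚ`-algebra structure on it. On
`f.SplittingField` two such structures arise, equal but not syntactically so: the one coming from the
construction of the splitting field and the one of a division ring of characteristic zero. -/
theorem splittingField_galois (L : Type) [Field L] [Algebra ℚ L] (f : ℚ[X])
    [f.IsSplittingField ℚ L]
    (hf : f = 2713*X^16 + 9264*X^15 + 24252*X^14 - 1352*X^13 - 270446*X^12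
      - 739224*X^11 - 599968*X^10 + 1502208*X^9 + 6136803*X^8 + 10670696*X^7
      + 11231488*X^6 + 7603968*X^5 + 3052898*X^4 + 591416*X^3 + 141500*X^2
      + 210760*X + 154057) :
    IsGalois ℚ L ∧
    Module.finrank ℚ L = 16 ∧
    Nonempty ((L ≃ₐ[ℚ] L) ≃* DihedralGroup 4 × Multiplicative (ZMod 2)) := by
  have : CharZero L := algebraRat.charZero L
  have : FiniteDimensional ℚ L := IsSplittingField.finiteDimensional L f
  have : Normal ℚ L := Normal.of_isSplittingField f
  have hgal : IsGalois ℚ L := ⟨⟩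
  have hval : ∀ {K : Type} [Field K] [Algebra ℚ K] (x : K), aeval x f = fVal x := by
    intro K _ _ x
    rw [hf, fVal]
    simp [map_ofNat]
  have hf0 : f ≠ 0 := by
    intro h
    have h₁ := hval (0 : ℚ)
    rw [h] at h₁
    norm_num [fVal] at h₁
  -- the elements `q`, `t`, `v`, `s` in an algebraic closure
  obtain ⟨q, hq⟩ := IsAlgClosed.exists_pow_nat_eq (2 : AlgebraicClosure ℚ) two_pos
  obtain ⟨t, ht⟩ := IsAlgClosed.exists_pow_nat_eq (2 * q - 1) two_pos
  obtain ⟨v, hv⟩ := IsAlgClosed.exists_pow_nat_eq (-1 - 2 * q) two_pos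
  obtain ⟨s, hs⟩ := IsAlgClosed.exists_pow_nat_eq (-3 : AlgebraicClosure ℚ) two_pos
  let ι : L →ₐ[ℚ] AlgebraicClosure ℚ := IsAlgClosed.lift
  have hι : ∀ x : AlgebraicClosure ℚ, fVal x = 0 → x ∈ ι.fieldRange := by
    intro x hx
    have hmem : x ∈ f.rootSet (AlgebraicClosure ℚ) := (mem_rootSet_of_ne hf0).mpr (by rw [hval, hx])
    rw [← (IsSplittingField.splits L f).image_rootSet ι] at hmem
    obtain ⟨y, -, hy⟩ := hmem
    exact ⟨y, hy⟩
  obtain ⟨⟨t, rfl⟩, ⟨v, rfl⟩, ⟨s, rfl⟩⟩ := mem_of_roots_mem ι.fieldRange ht hv hs hq hι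
  obtain ⟨q, rfl⟩ : ∃ q' : L, ι q' = q := by
    refine ⟨(t^2 + 1) / 2, ?_⟩
    have h₂ : (2 : AlgebraicClosure ℚ) ≠ 0 := two_ne_zero
    have ht' : ι t ^ 2 = 2 * q - 1 := ht
    rw [map_div₀, map_add, map_pow, ht', map_one, map_ofNat]
    field_simp; ring
  have ht' : t^2 = 2*q - 1 := ι.injective (by simpa [map_ofNat] using ht)
  have hv' : v^2 = -1 - 2*q := ι.injective (by simpa [map_ofNat] using hv)
  have hs' : s^2 = -3 := ι.injective (by simpa [map_ofNat] using hs)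
  have hq' : q^2 = 2 := ι.injective (by simpa [map_ofNat] using hq)
  -- an automorphism is determined on the roots, which are expressions in `t`, `v`, `s`, `q`
  have hext : ∀ σ τ : L ≃ₐ[ℚ] L,
      σ t = τ t → σ v = τ v → σ s = τ s → σ = τ := by
    intro σ τ h₁ h₂ h₃
    have h₄ : σ q = τ q := by
      have h₅ : q = (t^2 + 1) / 2 := by rw [ht']; ring
      rw [h₅]; simp [h₁, map_ofNat]
    have hmap : ∀ (φ : L ≃ₐ[ℚ] L) (a b c d : L),
        φ (rt a b c d) = rt (φ a) (φ b) (φ c) (φ d) := by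
      intro φ a b c d
      simp [rt, map_ofNat]
    have heq : σ.toAlgHom = τ.toAlgHom := by
      refine AlgHom.ext_of_adjoin_eq_top (IsSplittingField.adjoin_rootSet L f) ?_
      intro x hx
      have hx₀ : fVal x = 0 := by rw [← hval]; exact ((mem_rootSet_of_ne hf0).mp hx)
      obtain ⟨a, b, c, rfl | rfl⟩ := fVal_root ht' hv' hs' hq' hx₀ <;>
        simp [hmap, h₁, h₂, h₃, h₄]
    exact AlgEquiv.ext fun x => DFunLike.congr_fun heq x
  obtain ⟨e⟩ := nonempty_gal_mulEquiv ht' hv' hs' hq' hext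
  refine ⟨hgal, ?_, ⟨e⟩⟩
  rw [← IsGalois.card_aut_eq_finrank, Nat.card_congr e.toEquiv, Nat.card_prod,
    DihedralGroup.nat_card]
  simp

/-- The splitting field of the degree-16 polynomial defining the field of definition of
the quadritangents of `X₀(42)` is Galois over `ℚ` of degree 16 with Galois group
`D₈ × C₂` (dihedral of order 8 times cyclic of order 2). -/
theorem stmt_15 (f : ℚ[X])
    (hf : f = 2713*X^16 + 9264*X^15 + 24252*X^14 - 1352*X^13 - 270446*X^12
      - 739224*X^11 - 599968*X^10 + 1502208*X^9 + 6136803*X^8 + 10670696*X^7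
      + 11231488*X^6 + 7603968*X^5 + 3052898*X^4 + 591416*X^3 + 141500*X^2
      + 210760*X + 154057) :
    IsGalois ℚ f.SplittingField ∧
    Module.finrank ℚ f.SplittingField = 16 ∧
    Nonempty (f.Gal ≃* DihedralGroup 4 × Multiplicative (ZMod 2)) := by
  obtain ⟨h₁, h₂, h₃⟩ :=
    @splittingField_galois f.SplittingField _ _ f (IsSplittingField.splittingField f) hf
  refine ⟨?_, ?_, h₃⟩
  · convert h₁
    exact Subsingleton.elim _ _
  · convert h₂
end

section
/- Let f(u) = u¹² − 5u¹¹ + 13u¹⁰ − 25u⁹ + 39u⁸ − 50u⁷ + 53u⁶ − 48u⁵ + 37u⁴ − 23u³ + 12u² − 4u + 1 ∈ ℚ[u]. Then f is irreducible over ℚ, the number field K = ℚ[u]/(f) has degree 12 over ℚ, K is not a Galois extension of ℚ, and the automorphism group Aut(K/ℚ) is cyclic of order 6. -/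
open Polynomial

/-!
Let `θ` be a root of `f`.

*Irreducibility.* Every field `ℚ(θ)` contains a root `w` of the cubic `x³ - x² + 3x + 1`
(irreducible modulo 3) and a root `v` of the quartic `x⁴ - x³ + x² + x + 1` (irreducible modulo 2),
by `cubic_rel` and `quartic_rel`. Hence 12 divides `[ℚ(θ) : ℚ]`, so that an irreducible factor of
`f` has degree 12 (`fpoly_irreducible`). The irreducibility of `f` is thus established without
using that `ℚ[u]/(f)` is a field.

*Not Galois.* If `K` were Galois, the quartic would split in it, and its roots yield a square root
of 5 (`sqrt_five_of_splits`). But `f` has a root in the 47-adic numbers by Hensel's lemma, so `K`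
embeds in `ℚ_[47]`, where 5 is not a square.

*Automorphisms.* There is an explicit polynomial expression `g` in `θ` with `f(g) = 0`
(`sigma_powers`). The resulting endomorphism `σ` of `K`, sending `θ` to `g`, has order exactly 6
(`sigma_orbit`). So 6 divides `|Aut(K/ℚ)| ≤ 12`, and since `K` is not Galois the order is 6 and `σ`
generates the group.
-/

/-! ### Explicit relations modulo `f` -/

/-- The cubic subfield: a polynomial in a root `θ` of `f` which is a root of `x³ - x² + 3x + 1`. -/
lemma cubic_rel {R : Type*} [CommRing R] {θ : R}
    (h : θ^12 - 5*θ^11 + 13*θ^10 - 25*θ^9 + 39*θ^8 - 50*θ^7 + 53*θ^6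
      - 48*θ^5 + 37*θ^4 - 23*θ^3 + 12*θ^2 - 4*θ + 1 = 0) :
    ∃ w : R, w^3 - w^2 + 3*w + 1 = 0 := by
  obtain ⟨w, hw⟩ : ∃ w : R, w =
      θ^11 - 6*θ^10 + 16*θ^9 - 29*θ^8 + 43*θ^7 - 53*θ^6 + 52*θ^5 - 42*θ^4 + 31*θ^3
      - 18*θ^2 + 7*θ - 2 := ⟨_, rfl⟩
  have h2 : w^2 =
      4*θ^11 - 18*θ^10 + 40*θ^9 - 66*θ^8 + 90*θ^7 - 98*θ^6 + 82*θ^5 - 58*θ^4 +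
      34*θ^3 - 10*θ^2 + 2*θ + 1 := by
    rw [hw]
    linear_combination (θ^10 - 7*θ^9 + 20*θ^8 - 34*θ^7 + 46*θ^6 - 55*θ^5 + 51*θ^4 - 33*θ^3 + 23*θ^2
      - 18*θ + 3) * h
  refine ⟨w, ?_⟩
  rw [pow_succ, h2, hw]
  linear_combination (4*θ^10 - 22*θ^9 + 50*θ^8 - 74*θ^7 + 94*θ^6 - 100*θ^5 + 72*θ^4 - 36*θ^3 +
      28*θ^2 - 10*θ - 8) * h

/-- The quartic subfield: a root `v` of `x⁴ - x³ + x² + x + 1`, namely the product of the three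
images of `θ` under the automorphisms of order dividing 3. -/
lemma quartic_rel {R : Type*} [CommRing R] {θ : R}
    (h : θ^12 - 5*θ^11 + 13*θ^10 - 25*θ^9 + 39*θ^8 - 50*θ^7 + 53*θ^6
      - 48*θ^5 + 37*θ^4 - 23*θ^3 + 12*θ^2 - 4*θ + 1 = 0) :
    ∃ v : R, v^4 - v^3 + v^2 + v + 1 = 0 := by
  refine ⟨-θ^4 + 2*θ^3 - 2*θ^2 + 2*θ - 1, ?_⟩
  linear_combination (θ^4 - 3*θ^3 + 4*θ^2 - 4*θ + 3) * h

set_option maxHeartbeats 1000000 in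
/-- The powers of `g`, the image of a root `θ` under the automorphism of order 6, reduced modulo `f`;
the last relation says that `g` is again a root of `f`. -/
lemma sigma_powers {R : Type*} [CommRing R] {θ : R}
    (h : θ^12 - 5*θ^11 + 13*θ^10 - 25*θ^9 + 39*θ^8 - 50*θ^7 + 53*θ^6
      - 48*θ^5 + 37*θ^4 - 23*θ^3 + 12*θ^2 - 4*θ + 1 = 0)
    {g : R}
    (hg : g = -θ^10 + 5*θ^9 - 12*θ^8 + 21*θ^7 - 30*θ^6 + 35*θ^5 - 33*θ^4 + 26*θ^3 - 18*θ^2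
      + 9*θ - 3) :
    g^2 = -3*θ^11 + 14*θ^10 - 33*θ^9 + 58*θ^8 - 84*θ^7 + 99*θ^6 - 94*θ^5 + 76*θ^4 -
      53*θ^3 + 26*θ^2 - 10*θ + 1 ∧
    g^3 = -2*θ^11 + 11*θ^10 - 30*θ^9 + 57*θ^8 - 87*θ^7 + 110*θ^6 - 113*θ^5 + 96*θ^4 -
      71*θ^3 + 42*θ^2 - 17*θ + 5 ∧
    g^4 = θ^11 - 3*θ^10 + 3*θ^9 - θ^8 - 2*θ^7 + 9*θ^6 - 16*θ^5 + 15*θ^4 - 13*θ^3 +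
      12*θ^2 - 4*θ + 2 ∧
    g^5 = 2*θ^11 - 8*θ^10 + 15*θ^9 - 21*θ^8 + 26*θ^7 - 23*θ^6 + 12*θ^5 - 6*θ^4 + θ^3 +
      5*θ^2 - 3*θ + 1 ∧
    g^6 = 4*θ^11 - 19*θ^10 + 43*θ^9 - 71*θ^8 + 99*θ^7 - 110*θ^6 + 94*θ^5 - 70*θ^4 +
      44*θ^3 - 16*θ^2 + 3*θ + 1 ∧
    g^7 = 6*θ^11 - 33*θ^10 + 85*θ^9 - 154*θ^8 + 230*θ^7 - 280*θ^6 + 273*θ^5 - 224*θ^4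
      + 158*θ^3 - 84*θ^2 + 31*θ - 6 ∧
    g^8 = 3*θ^11 - 23*θ^10 + 71*θ^9 - 140*θ^8 + 222*θ^7 - 289*θ^6 + 304*θ^5 - 262*θ^4
      + 193*θ^3 - 118*θ^2 + 46*θ - 13 ∧
    g^9 = -4*θ^11 + 9*θ^10 - 2*θ^9 - 16*θ^8 + 47*θ^7 - 89*θ^6 + 124*θ^5 - 123*θ^4 +
      98*θ^3 - 79*θ^2 + 32*θ - 12 ∧
    g^10 = -12*θ^11 + 48*θ^10 - 99*θ^9 + 157*θ^8 - 205*θ^7 + 214*θ^6 - 166*θ^5 +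
      110*θ^4 - 66*θ^3 + 5*θ^2 + 3*θ - 6 ∧
    g^11 = -18*θ^11 + 83*θ^10 - 198*θ^9 + 346*θ^8 - 492*θ^7 + 579*θ^6 - 537*θ^5 +
      419*θ^4 - 291*θ^3 + 134*θ^2 - 45*θ + 5 ∧
    g^12 - 5*g^11 + 13*g^10 - 25*g^9 + 39*g^8 - 50*g^7 + 53*g^6
      - 48*g^5 + 37*g^4 - 23*g^3 + 12*g^2 - 4*g + 1 = 0 := by
  have h2 : g^2 = -3*θ^11 + 14*θ^10 - 33*θ^9 + 58*θ^8 - 84*θ^7 + 99*θ^6 - 94*θ^5 + 76*θ^4 -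
      53*θ^3 + 26*θ^2 - 10*θ + 1 := by
    rw [pow_succ, pow_one, hg]
    linear_combination (θ^8 - 5*θ^7 + 11*θ^6 - 17*θ^5 + 22*θ^4 - 23*θ^3 + 19*θ^2 - 12*θ + 8) * h
  have h3 : g^3 = -2*θ^11 + 11*θ^10 - 30*θ^9 + 57*θ^8 - 87*θ^7 + 110*θ^6 - 113*θ^5 + 96*θ^4 -
      71*θ^3 + 42*θ^2 - 17*θ + 5 := by
    rw [pow_succ, h2, hg]
    linear_combination (3*θ^9 - 14*θ^8 + 30*θ^7 - 47*θ^6 + 62*θ^5 - 66*θ^4 + 54*θ^3 - 36*θ^2 + 24*θ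
      - 8) * h
  have h4 : g^4 = θ^11 - 3*θ^10 + 3*θ^9 - θ^8 - 2*θ^7 + 9*θ^6 - 16*θ^5 + 15*θ^4 - 13*θ^3 +
      12*θ^2 - 4*θ + 2 := by
    rw [pow_succ, h3, hg]
    linear_combination (2*θ^9 - 11*θ^8 + 28*θ^7 - 48*θ^6 + 66*θ^5 - 76*θ^4 + 69*θ^3 - 49*θ^2 + 32*θ
      - 17) * h
  have h5 : g^5 = 2*θ^11 - 8*θ^10 + 15*θ^9 - 21*θ^8 + 26*θ^7 - 23*θ^6 + 12*θ^5 - 6*θ^4 + θ^3 +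
      5*θ^2 - 3*θ + 1 := by
    rw [pow_succ, h4, hg]
    linear_combination (-θ^9 + 3*θ^8 - 2*θ^7 - θ^6 + 3*θ^5 - 8*θ^4 + 13*θ^3 - 9*θ^2 + 5*θ - 7) * h
  have h6 : g^6 = 4*θ^11 - 19*θ^10 + 43*θ^9 - 71*θ^8 + 99*θ^7 - 110*θ^6 + 94*θ^5 - 70*θ^4 +
      44*θ^3 - 16*θ^2 + 3*θ + 1 := by
    rw [pow_succ, h5, hg]
    linear_combination (-2*θ^9 + 8*θ^8 - 13*θ^7 + 15*θ^6 - 17*θ^5 + 13*θ^4 - 2*θ^3 - θ - 4) * h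
  have h7 : g^7 = 6*θ^11 - 33*θ^10 + 85*θ^9 - 154*θ^8 + 230*θ^7 - 280*θ^6 + 273*θ^5 - 224*θ^4
      + 158*θ^3 - 84*θ^2 + 31*θ - 6 := by
    rw [pow_succ, h6, hg]
    linear_combination (-4*θ^9 + 19*θ^8 - 39*θ^7 + 56*θ^6 - 71*θ^5 + 71*θ^4 - 49*θ^3 + 29*θ^2 - 19*θ
      + 3) * h
  have h8 : g^8 = 3*θ^11 - 23*θ^10 + 71*θ^9 - 140*θ^8 + 222*θ^7 - 289*θ^6 + 304*θ^5 - 262*θ^4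
      + 193*θ^3 - 118*θ^2 + 46*θ - 13 := by
    rw [pow_succ, h7, hg]
    linear_combination (-6*θ^9 + 33*θ^8 - 79*θ^7 + 127*θ^6 - 172*θ^5 + 190*θ^4 - 160*θ^3 + 109*θ^2 -
      69*θ + 31) * h
  have h9 : g^9 = -4*θ^11 + 9*θ^10 - 2*θ^9 - 16*θ^8 + 47*θ^7 - 89*θ^6 + 124*θ^5 - 123*θ^4 +
      98*θ^3 - 79*θ^2 + 32*θ - 12 := by
    rw [pow_succ, h8, hg]
    linear_combination (-3*θ^9 + 23*θ^8 - 68*θ^7 + 120*θ^6 - 171*θ^5 + 203*θ^4 - 188*θ^3 + 137*θ^2 -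
      83*θ + 51) * h
  have h10 : g^10 = -12*θ^11 + 48*θ^10 - 99*θ^9 + 157*θ^8 - 205*θ^7 + 214*θ^6 - 166*θ^5 +
      110*θ^4 - 66*θ^3 + 5*θ^2 + 3*θ - 6 := by
    rw [pow_succ, h9, hg]
    linear_combination (4*θ^9 - 9*θ^8 - 2*θ^7 + 21*θ^6 - 44*θ^5 + 72*θ^4 - 89*θ^3 + 76*θ^2 - 39*θ +
      42) * h
  have h11 : g^11 = -18*θ^11 + 83*θ^10 - 198*θ^9 + 346*θ^8 - 492*θ^7 + 579*θ^6 - 537*θ^5 +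
      419*θ^4 - 291*θ^3 + 134*θ^2 - 45*θ + 5 := by
    rw [pow_succ, h10, hg]
    linear_combination (12*θ^9 - 48*θ^8 + 87*θ^7 - 121*θ^6 + 142*θ^5 - 132*θ^4 + 79*θ^3 - 34*θ^2 +
      34*θ + 13) * h
  refine ⟨h2, h3, h4, h5, h6, h7, h8, h9, h10, h11, ?_⟩
  rw [pow_succ, h11, h10, h9, h8, h7, h6, h5, h4, h3, h2, hg]
  linear_combination (18*θ^9 - 83*θ^8 + 180*θ^7 - 281*θ^6 + 359*θ^5 - 384*θ^4 + 305*θ^3 - 187*θ^2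
      + 134*θ - 36) * h

/-- The orbit of `θ` under an automorphism `σ` with `σ(θ) = g`; it closes after six steps. -/
lemma sigma_orbit {K : Type*} [Field K] [Algebra ℚ K] {θ : K}
    (h : θ^12 - 5*θ^11 + 13*θ^10 - 25*θ^9 + 39*θ^8 - 50*θ^7 + 53*θ^6
      - 48*θ^5 + 37*θ^4 - 23*θ^3 + 12*θ^2 - 4*θ + 1 = 0)
    (σ : K →ₐ[ℚ] K)
    (hσ : σ θ = -θ^10 + 5*θ^9 - 12*θ^8 + 21*θ^7 - 30*θ^6 + 35*θ^5 - 33*θ^4 + 26*θ^3 - 18*θ^2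
      + 9*θ - 3) :
    σ (σ θ) = θ^11 - 6*θ^10 + 17*θ^9 - 33*θ^8 + 51*θ^7 - 65*θ^6 + 68*θ^5 - 59*θ^4 + 44*θ^3
      - 27*θ^2 + 12*θ - 3 ∧
    σ (σ (σ θ)) = 3*θ^11 - 14*θ^10 + 33*θ^9 - 58*θ^8 + 84*θ^7 - 99*θ^6 + 94*θ^5 - 77*θ^4 +
      54*θ^3 - 27*θ^2 + 11*θ - 1 ∧
    σ (σ (σ (σ (σ (σ θ))))) = θ := by
  obtain ⟨p2, p3, p4, p5, p6, p7, p8, p9, p10, p11, -⟩ := sigma_powers h hσ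
  have s2 : σ (σ θ) = θ^11 - 6*θ^10 + 17*θ^9 - 33*θ^8 + 51*θ^7 - 65*θ^6 + 68*θ^5 - 59*θ^4 + 44*θ^3
      - 27*θ^2 + 12*θ - 3 := by
    rw [hσ]
    simp only [map_add, map_sub, map_neg, map_mul, map_pow, map_ofNat]
    rw [p2, p3, p4, p5, p6, p7, p8, p9, p10, hσ]
    ring
  have s3 : σ (σ (σ θ)) = 3*θ^11 - 14*θ^10 + 33*θ^9 - 58*θ^8 + 84*θ^7 - 99*θ^6 + 94*θ^5 - 77*θ^4 +
      54*θ^3 - 27*θ^2 + 11*θ - 1 := by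
    rw [s2]
    simp only [map_add, map_sub, map_mul, map_pow, map_ofNat]
    rw [p2, p3, p4, p5, p6, p7, p8, p9, p10, p11, hσ]
    ring
  have s4 : σ (σ (σ (σ θ))) = θ^10 - 4*θ^9 + 8*θ^8 - 13*θ^7 + 18*θ^6 - 20*θ^5 + 18*θ^4 - 15*θ^3 + 11*θ^2 -
      5*θ + 3 := by
    rw [s3]
    simp only [map_add, map_sub, map_mul, map_pow, map_ofNat, map_one]
    rw [p2, p3, p4, p5, p6, p7, p8, p9, p10, p11, hσ]
    ring
  have s5 : σ (σ (σ (σ (σ θ)))) = -3*θ^11 + 15*θ^10 - 38*θ^9 + 70*θ^8 - 105*θ^7 + 129*θ^6 - 129*θ^5 + 109*θ^4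
      - 78*θ^3 + 43*θ^2 - 18*θ + 4 := by
    rw [s4]
    simp only [map_add, map_sub, map_mul, map_pow, map_ofNat]
    rw [p2, p3, p4, p5, p6, p7, p8, p9, p10, hσ]
    ring
  have s6 : σ (σ (σ (σ (σ (σ θ))))) = θ := by
    rw [s5]
    simp only [map_add, map_sub, map_neg, map_mul, map_pow, map_ofNat]
    rw [p2, p3, p4, p5, p6, p7, p8, p9, p10, p11, hσ]
    ring
  exact ⟨s2, s3, s6⟩

/-! ### Irreducibility -/

/-- A monic integer polynomial that is irreducible modulo a prime is irreducible over `ℚ`. -/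
lemma irreducible_rat_of_mod (p : ℕ) [Fact p.Prime] (c : ℤ[X]) (hc : c.Monic)
    (hp : Irreducible (c.map (Int.castRingHom (ZMod p)))) :
    Irreducible (c.map (algebraMap ℤ ℚ)) :=
  (hc.irreducible_iff_irreducible_map_fraction_map).1
    (hc.irreducible_of_irreducible_map _ _ hp)

lemma cubic_no_root_mod_three : ∀ x : ZMod 3, x^3 - x^2 + 3*x + 1 ≠ 0 := by decide

lemma five_not_square_mod : ∀ x : ZMod 47, x^2 ≠ 5 := by decide

/-- The cubic is irreducible because it has no root modulo 3. -/
lemma cubic_irreducible : Irreducible (X^3 - X^2 + 3*X + 1 : ℚ[X]) := by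
  have hm : (X^3 - X^2 + 3*X + 1 : ℤ[X]).Monic := by monicity!
  have : Fact (Nat.Prime 3) := ⟨by norm_num⟩
  have := irreducible_rat_of_mod 3 _ hm (by
    refine irreducible_of_degree_le_three_of_not_isRoot ?_ ?_
    · rw [hm.natDegree_map]
      have : (X^3 - X^2 + 3*X + 1 : ℤ[X]).natDegree = 3 := by compute_degree!
      simp [this]
    · intro x
      simp only [IsRoot.def, Polynomial.map_add, Polynomial.map_sub, Polynomial.map_mul,
        Polynomial.map_pow, Polynomial.map_ofNat, Polynomial.map_one, map_X, eval_add, eval_sub,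
        eval_mul, eval_pow, eval_X, eval_ofNat, eval_one]
      exact cubic_no_root_mod_three x)
  simpa using this

/-- The quartic is irreducible because it reduces modulo 2 to `x⁴ + x³ + x² + x + 1`, which has
neither a root nor a quadratic factor over the field with two elements. -/
lemma quartic_irreducible : Irreducible (X^4 - X^3 + X^2 + X + 1 : ℚ[X]) := by
  have hm : (X^4 - X^3 + X^2 + X + 1 : ℤ[X]).Monic := by monicity!
  have key : Irreducible (X^4 - X^3 + X^2 + X + 1 : (ZMod 2)[X]) := by
    have hm2 : (X^4 - X^3 + X^2 + X + 1 : (ZMod 2)[X]).Monic := by monicity!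
    have hd : (X^4 - X^3 + X^2 + X + 1 : (ZMod 2)[X]).natDegree = 4 := by compute_degree!
    rw [hm2.irreducible_iff_lt_natDegree_lt (fun h => by simp [h] at hd)]
    rintro q hq hqd ⟨r, hr⟩
    rw [hd, Finset.mem_Ioc] at hqd
    have hroot : ∀ x : ZMod 2, q.eval x ≠ 0 := by
      intro x hx
      have hdec : ∀ x : ZMod 2, x^4 - x^3 + x^2 + x + 1 ≠ 0 := by decide
      have := congrArg (eval x) hr
      rw [eval_mul, hx, zero_mul] at this
      simp only [eval_add, eval_sub, eval_pow, eval_X, eval_one] at this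
      exact hdec x this
    have hdeg : q.natDegree = 1 ∨ q.natDegree = 2 := by omega
    rcases hdeg with h1 | h2
    · rw [hq.eq_X_add_C h1] at hroot
      exact hroot (-q.coeff 0) (by rw [eval_add, eval_X, eval_C, neg_add_cancel])
    · have hrm : r.Monic := hq.of_mul_monic_left (hr ▸ hm2)
      have hrd : r.natDegree = 2 := by
        have := hq.natDegree_mul hrm
        rw [← hr, hd] at this
        omega
      have hq' : q = X^2 + C (q.coeff 1) * X + C (q.coeff 0) := by
        conv_lhs => rw [hq.as_sum, h2]
        simp [Finset.sum_range_succ]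
        ring
      have hr' : r = X^2 + C (r.coeff 1) * X + C (r.coeff 0) := by
        conv_lhs => rw [hrm.as_sum, hrd]
        simp [Finset.sum_range_succ]
        ring
      generalize q.coeff 1 = a at hq'
      generalize q.coeff 0 = b at hq'
      generalize r.coeff 1 = c at hr'
      generalize r.coeff 0 = d at hr'
      have hexp : (X^4 - X^3 + X^2 + X + 1 : (ZMod 2)[X]) =
          X^4 + C (a + c) * X^3 + C (b + a * c + d) * X^2 + C (a * d + b * c) * X
            + C (b * d) := by
        rw [hr, hq', hr']
        simp only [C_add, C_mul]
        ring
      have e0 := congrArg (coeff · 0) hexp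
      have e1 := congrArg (coeff · 1) hexp
      have e2 := congrArg (coeff · 2) hexp
      have e3 := congrArg (coeff · 3) hexp
      simp [coeff_X, coeff_one, coeff_X_pow, coeff_C, coeff_C_mul, -map_add, -map_mul] at e0 e1 e2 e3
      clear hexp hq' hr'
      revert a b c d
      decide
  have : Fact (Nat.Prime 2) := ⟨Nat.prime_two⟩
  have := irreducible_rat_of_mod 2 _ hm (by simpa using key)
  simpa using this

/-- The dimension of a finite extension of `ℚ` is divisible by the degree of any irreducible
polynomial with a root in it. -/
lemma natDegree_dvd_finrank {L : Type*} [Field L] [Algebra ℚ L] [FiniteDimensional ℚ L]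
    {c : ℚ[X]} (hc : Irreducible c) (hm : c.Monic) {x : L} (hx : aeval x c = 0) :
    c.natDegree ∣ Module.finrank ℚ L := by
  rw [minpoly.eq_of_irreducible_of_monic hc hx hm]
  exact minpoly.degree_dvd (Algebra.IsIntegral.isIntegral x)

/-- The polynomial `f` of degree 12 whose root field is studied, as a named constant. -/
noncomputable def fpoly : ℚ[X] :=
  X^12 - 5*X^11 + 13*X^10 - 25*X^9 + 39*X^8 - 50*X^7 + 53*X^6
    - 48*X^5 + 37*X^4 - 23*X^3 + 12*X^2 - 4*X + 1

lemma fpoly_monic : fpoly.Monic := by unfold fpoly; monicity!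

lemma fpoly_natDegree : fpoly.natDegree = 12 := by unfold fpoly; compute_degree!

lemma aeval_fpoly {L : Type*} [CommRing L] [Algebra ℚ L] (x : L) : aeval x fpoly =
    x^12 - 5*x^11 + 13*x^10 - 25*x^9 + 39*x^8 - 50*x^7 + 53*x^6
      - 48*x^5 + 37*x^4 - 23*x^3 + 12*x^2 - 4*x + 1 := by
  simp [fpoly, map_ofNat]

/-- Any field containing a root of `f` contains a cubic and a quartic field, so every irreducible
factor of `f` has degree divisible by 12. -/
lemma fpoly_irreducible : Irreducible fpoly := by
  obtain ⟨p, hp, hpf⟩ := exists_irreducible_of_natDegree_ne_zero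
    (f := fpoly) (by rw [fpoly_natDegree]; norm_num)
  have : Fact (Irreducible p) := ⟨hp⟩
  have : FiniteDimensional ℚ (AdjoinRoot p) := (AdjoinRoot.powerBasis hp.ne_zero).finite
  have hfin : Module.finrank ℚ (AdjoinRoot p) = p.natDegree := by
    rw [(AdjoinRoot.powerBasis hp.ne_zero).finrank, AdjoinRoot.powerBasis_dim]
  have hroot : aeval (AdjoinRoot.root p) fpoly = 0 :=
    aeval_eq_zero_of_dvd_aeval_eq_zero hpf (by
      rw [aeval_def]
      convert AdjoinRoot.eval₂_root p
      · rfl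
      · exact Subsingleton.elim _ _)
  rw [aeval_fpoly] at hroot
  obtain ⟨w, hw⟩ := cubic_rel hroot
  obtain ⟨v, hv⟩ := quartic_rel hroot
  have h3 := natDegree_dvd_finrank cubic_irreducible (by monicity!) (x := w) (by simpa [map_ofNat] using hw)
  have h4 := natDegree_dvd_finrank quartic_irreducible (by monicity!) (x := v) (by simpa using hv)
  have d3 : (X^3 - X^2 + 3*X + 1 : ℚ[X]).natDegree = 3 := by compute_degree!
  have d4 : (X^4 - X^3 + X^2 + X + 1 : ℚ[X]).natDegree = 4 := by compute_degree!
  rw [d3, hfin] at h3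
  rw [d4, hfin] at h4
  have hpos : 0 < p.natDegree := hp.natDegree_pos
  have hle : fpoly.natDegree ≤ p.natDegree := by
    rw [fpoly_natDegree]
    omega
  exact (associated_of_dvd_of_natDegree_le hpf fpoly_monic.ne_zero hle).irreducible hp

/-! ### Failure of normality -/

/-- `f` has a simple root modulo 47, which Hensel's lemma lifts to the 47-adic integers. -/
lemma padic_root [Fact (Nat.Prime 47)] : ∃ z : ℤ_[47],
    z^12 - 5*z^11 + 13*z^10 - 25*z^9 + 39*z^8 - 50*z^7 + 53*z^6
      - 48*z^5 + 37*z^4 - 23*z^3 + 12*z^2 - 4*z + 1 = 0 := by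
  -- the root modulo 47 is 3: `F(3) = 97243` is divisible by 47 and `F'(3) = 449105` is not
  let F : ℤ[X] := X^12 - 5*X^11 + 13*X^10 - 25*X^9 + 39*X^8 - 50*X^7 + 53*X^6
      - 48*X^5 + 37*X^4 - 23*X^3 + 12*X^2 - 4*X + 1
  have hF : aeval (3 : ℤ_[47]) F = ((97243 : ℤ) : ℤ_[47]) := by
    simp [F, map_ofNat]; norm_num
  have hF' : aeval (3 : ℤ_[47]) (derivative F) = ((449105 : ℤ) : ℤ_[47]) := by
    simp [F, map_ofNat]; norm_num
  have h1 : ‖((97243 : ℤ) : ℤ_[47])‖ < 1 := by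
    rw [PadicInt.norm_int_lt_one_iff_dvd]; norm_num
  have h2 : ‖((449105 : ℤ) : ℤ_[47])‖ = 1 := by
    refine le_antisymm (PadicInt.norm_le_one _) (not_lt.1 ?_)
    rw [PadicInt.norm_int_lt_one_iff_dvd]; norm_num
  obtain ⟨z, hz, -⟩ := hensels_lemma (F := F) (a := (3 : ℤ_[47])) (by
    rw [hF, hF', h2]; simpa using h1)
  simp only [F, map_add, map_sub, map_mul, map_pow, map_ofNat, map_one, aeval_X] at hz
  exact ⟨z, hz⟩

/-- 5 is not a square in the 47-adic numbers, being a non-residue modulo 47. -/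
lemma padic_no_sqrt_five [Fact (Nat.Prime 47)] (s : ℚ_[47]) : s^2 ≠ 5 := by
  intro hs
  have hint : IsIntegral ℤ_[47] s :=
    ⟨X^2 - 5, by monicity!, by simp [hs]⟩
  obtain ⟨y, rfl⟩ := IsIntegrallyClosed.isIntegral_iff.1 hint
  have hy : y^2 = 5 := by
    apply IsFractionRing.injective ℤ_[47] ℚ_[47]
    rw [map_pow, hs]
    exact (map_ofNat (algebraMap ℤ_[47] ℚ_[47]) 5).symm
  have := congrArg (PadicInt.toZMod (p := 47)) hy
  rw [map_pow, map_ofNat] at this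
  exact five_not_square_mod _ this

/-- The four roots of the quartic are the roots of `x² - yx - 1` and `x² - (1 - y)x - 1`, where
`y = v - 1/v` and `y² - y + 3 = 0`. If all of them lie in `K`, so does a square root of 5, namely
`(v + 1/v)(v' + 1/v')`, since the squares of the two factors are `y² + 4 = y + 1` and its conjugate
`2 - y`, of product 5. -/
lemma sqrt_five_of_splits {K : Type*} [Field K] (v : K)
    (hv : v^4 - v^3 + v^2 + v + 1 = 0)
    (hs : (X^4 - X^3 + X^2 + X + 1 : K[X]).Splits) : ∃ s : K, s^2 = 5 := by
  have hv0 : v ≠ 0 := by rintro rfl; simp at hv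
  have hinv : v⁻¹ = - (v^3 - v^2 + v + 1) := by
    field_simp
    linear_combination hv
  obtain ⟨y, hy⟩ : ∃ y, y = v - v⁻¹ := ⟨_, rfl⟩
  have hvy : v^2 - y * v - 1 = 0 := by rw [hy]; field_simp; ring
  have hyy : y^2 - y + 3 = 0 := by
    rw [hy]
    field_simp
    linear_combination hv
  have hne : (X^4 - X^3 + X^2 + X + 1 : K[X]) ≠ 0 := by
    apply Monic.ne_zero; monicity!
  have hfac : (X^4 - X^3 + X^2 + X + 1 : K[X]) =
      (X^2 - C (1 - y) * X - 1) * (X^2 - C y * X - 1) := by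
    have : (C y : K[X])^2 = C y - 3 := by
      rw [← C_pow, show y^2 = y - 3 by linear_combination hyy, C_sub]; rfl
    simp only [C_sub, C_1]
    linear_combination X^2 * this
  obtain ⟨v', hv'⟩ := (hs.of_dvd hne ⟨_, hfac⟩).exists_eval_eq_zero (by
    rw [show (X^2 - C (1 - y) * X - 1 : K[X]).degree = 2 by compute_degree!]
    norm_num)
  simp only [eval_sub, eval_mul, eval_pow, eval_X, eval_C, eval_one] at hv'
  -- `v + 1/v = 2v - y` and `v' + 1/v' = 2v' - (1 - y)` have squares `y² + 4` and `(1 - y)² + 4`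
  refine ⟨(2*v - y) * (2*v' - (1 - y)), ?_⟩
  have a1 : (2*v - y)^2 = y + 1 := by linear_combination 4 * hvy + hyy
  have a2 : (2*v' - (1 - y))^2 = 2 - y := by linear_combination 4 * hv' + hyy
  rw [mul_pow, a1, a2]
  linear_combination -hyy

/-- If `K = ℚ(θ)` were Galois, the quartic would split in it and 5 would be a square in `K`; but `K`
embeds in the 47-adic numbers. -/
lemma not_isGalois {K : Type*} [Field K] [Algebra ℚ K] (e : K ≃ₐ[ℚ] AdjoinRoot fpoly) :
    ¬ IsGalois ℚ K := by
  intro hgal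
  have : Fact (Nat.Prime 47) := ⟨by norm_num⟩
  obtain ⟨z, hz⟩ := padic_root
  have hz' : aeval (z : ℚ_[47]) fpoly = 0 := by
    rw [aeval_fpoly]
    exact_mod_cast congrArg (fun t : ℤ_[47] => (t : ℚ_[47])) hz
  let φ : K →ₐ[ℚ] ℚ_[47] :=
    (AdjoinRoot.liftAlgHom fpoly (Algebra.ofId ℚ ℚ_[47]) (z : ℚ_[47]) hz').comp e.toAlgHom
  have hroot : aeval (e.symm (AdjoinRoot.root fpoly)) fpoly = 0 := by
    rw [aeval_algHom_apply e.symm, AdjoinRoot.aeval_eq, AdjoinRoot.mk_self, map_zero]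
  rw [aeval_fpoly] at hroot
  obtain ⟨v, hv⟩ := quartic_rel hroot
  have hmin : X^4 - X^3 + X^2 + X + 1 = minpoly ℚ v :=
    minpoly.eq_of_irreducible_of_monic quartic_irreducible (by simpa using hv) (by monicity!)
  have hs := hgal.to_normal.splits v
  rw [← hmin] at hs
  obtain ⟨s, hs5⟩ := sqrt_five_of_splits v hv (by simpa using hs)
  refine padic_no_sqrt_five (φ s) ?_
  rw [← map_pow, hs5, map_ofNat]

/-! ### The automorphism group -/

/-- The polynomial `f` is irreducible over `ℚ`, and the number field `K = ℚ[u]/(f)`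
has degree 12 over `ℚ`, is not Galois over `ℚ`, and its automorphism group
`Aut(K/ℚ)` is cyclic of order 6. -/
theorem stmt_16 (f : ℚ[X])
    (hf : f = X^12 - 5*X^11 + 13*X^10 - 25*X^9 + 39*X^8 - 50*X^7 + 53*X^6
      - 48*X^5 + 37*X^4 - 23*X^3 + 12*X^2 - 4*X + 1)
    (K : Type*) [Field K] [Algebra ℚ K] (e : K ≃ₐ[ℚ] AdjoinRoot f) :
    Irreducible f ∧
    Module.finrank ℚ K = 12 ∧
    ¬ IsGalois ℚ K ∧
    IsCyclic (K ≃ₐ[ℚ] K) ∧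
    Nat.card (K ≃ₐ[ℚ] K) = 6 := by
  obtain rfl : f = fpoly := hf
  have hfd : FiniteDimensional ℚ (AdjoinRoot fpoly) :=
    (AdjoinRoot.powerBasis' fpoly_monic).finite
  have hfdK : FiniteDimensional ℚ K := Module.Finite.equiv e.symm.toLinearEquiv
  have hfin : Module.finrank ℚ K = 12 := by
    rw [e.toLinearEquiv.finrank_eq, (AdjoinRoot.powerBasis' fpoly_monic).finrank,
      AdjoinRoot.powerBasis'_dim, fpoly_natDegree]
  have hng := not_isGalois e
  obtain ⟨θ, hθ⟩ : ∃ θ : K, θ = e.symm (AdjoinRoot.root fpoly) := ⟨_, rfl⟩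
  have hroot : aeval θ fpoly = 0 := by
    rw [hθ, aeval_algHom_apply e.symm, AdjoinRoot.aeval_eq, AdjoinRoot.mk_self, map_zero]
  have hmin : fpoly = minpoly ℚ θ :=
    minpoly.eq_of_irreducible_of_monic fpoly_irreducible hroot fpoly_monic
  -- `1, θ, …, θ¹¹` are linearly independent; the constant term serves to see that `p ≠ 0`
  have hindep : ∀ p : ℚ[X], p.coeff 0 ≠ 0 → p.natDegree < 12 → aeval θ p ≠ 0 := by
    intro p hp0 hpd hp
    have hle := natDegree_le_of_dvd (minpoly.dvd ℚ θ hp) (by rintro rfl; simp at hp0)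
    rw [← hmin, fpoly_natDegree] at hle
    omega
  -- an automorphism is determined by the image of `θ`
  have hext : ∀ τ : K →ₐ[ℚ] K, τ θ = θ → ∀ x, τ x = x := by
    intro τ hτ x
    have : τ.comp e.symm.toAlgHom = (AlgHom.id ℚ K).comp e.symm.toAlgHom := by
      apply AdjoinRoot.algHom_ext
      simpa [hθ] using hτ
    simpa using DFunLike.congr_fun this (e x)
  have h := hroot
  rw [aeval_fpoly] at h
  obtain ⟨g, hgθ⟩ : ∃ g : K, g =
      -θ^10 + 5*θ^9 - 12*θ^8 + 21*θ^7 - 30*θ^6 + 35*θ^5 - 33*θ^4 + 26*θ^3 - 18*θ^2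
      + 9*θ - 3 := ⟨_, rfl⟩
  have hg := (sigma_powers h hgθ).2.2.2.2.2.2.2.2.2.2
  rw [← aeval_fpoly] at hg
  let σ₀ : K →ₐ[ℚ] K :=
    (AdjoinRoot.liftAlgHom fpoly (Algebra.ofId ℚ K) g hg).comp e.toAlgHom
  have hσ₀ : σ₀ θ = g := by
    simp [σ₀, hθ]
    exact AdjoinRoot.liftAlgHom_root (p := fpoly) (Algebra.ofId ℚ K) g hg
  obtain ⟨o2, o3, o6⟩ := sigma_orbit h σ₀ (hσ₀.trans hgθ)
  let σ : K ≃ₐ[ℚ] K := AlgEquiv.ofBijective σ₀ (Algebra.IsAlgebraic.algHom_bijective σ₀)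
  have hσ : ∀ x, σ x = σ₀ x := fun x => rfl
  have hord : orderOf σ = 6 := by
    -- `σ⁶ = 1`, while `σ²` and `σ³` move `θ`
    refine orderOf_eq_of_pow_and_pow_div_prime (by norm_num) ?_ ?_
    · ext x
      have := hext ((σ^6 : K ≃ₐ[ℚ] K) : K →ₐ[ℚ] K)
        (by simpa [pow_succ, hσ] using o6) x
      simpa using this
    · intro p hp hpd h1
      have hpd' : p = 2 ∨ p = 3 := by
        rw [show (6 : ℕ) = 2 * 3 by norm_num, hp.dvd_mul] at hpd
        exact hpd.imp (Nat.prime_dvd_prime_iff_eq hp Nat.prime_two).1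
          (Nat.prime_dvd_prime_iff_eq hp Nat.prime_three).1
      have h1θ := DFunLike.congr_fun h1 θ
      rcases hpd' with rfl | rfl
      · have hfix : σ₀ (σ₀ (σ₀ θ)) = θ := by simpa [pow_succ, hσ] using h1θ
        rw [o3] at hfix
        refine hindep (3*X^11 - 14*X^10 + 33*X^9 - 58*X^8 + 84*X^7 - 99*X^6 + 94*X^5 - 77*X^4 +
          54*X^3 - 27*X^2 + 10*X - 1) ?_ ?_ ?_
        · simp [coeff_X]
        · refine lt_of_le_of_lt (b := 11) ?_ (by norm_num)
          compute_degree
        · simp [map_ofNat]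
          linear_combination hfix
      · have hfix : σ₀ (σ₀ θ) = θ := by simpa [pow_succ, hσ] using h1θ
        rw [o2] at hfix
        refine hindep (X^11 - 6*X^10 + 17*X^9 - 33*X^8 + 51*X^7 - 65*X^6 + 68*X^5 - 59*X^4 +
          44*X^3 - 27*X^2 + 11*X - 3) ?_ ?_ ?_
        · simp [coeff_X]
        · refine lt_of_le_of_lt (b := 11) ?_ (by norm_num)
          compute_degree
        · simp [map_ofNat]
          linear_combination hfix
  have hcard : Nat.card (K ≃ₐ[ℚ] K) = 6 := by
    have hdvd : 6 ∣ Nat.card (K ≃ₐ[ℚ] K) := hord ▸ orderOf_dvd_natCard σ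
    have hle : Nat.card (K ≃ₐ[ℚ] K) ≤ 12 := by
      rw [← hfin, Nat.card_eq_fintype_card]
      exact AlgEquiv.card_le
    have hne : Nat.card (K ≃ₐ[ℚ] K) ≠ 12 := fun h12 =>
      hng (IsGalois.of_card_aut_eq_finrank ℚ K (h12.trans hfin.symm))
    have hpos : 0 < Nat.card (K ≃ₐ[ℚ] K) := Nat.card_pos
    omega
  exact ⟨fpoly_irreducible, hfin, hng,
    isCyclic_of_orderOf_eq_card σ (hord.trans hcard.symm), hcard⟩
end
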